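/- arXiv:2109.12064 — 3 statements merged into one kernel-verified Lean document; each statement's English description precedes it below -/
import Mathlib

section
/- Let f : Y → X be a quasi-isometric embedding between proper geodesic metric spaces. Then the induced injection f_* : (∂_M Y, f) → ∂_M X is a closed map (equivalently, since f_* is injective, an open map). -/
/-!
The proof of `relative_boundary_map_isClosedMap` rests on uniform fellow-travelling in `X`
and compactness in `Y`.

Let `K` be closed in `(∂_M Y, f)`, the trace of a closed `K' ⊆ ∂_M Y`. By definition of the
direct limit topology it suffices that, for each gauge `N`, the `N`-Morse rays of `X` whose
class lies in `f_* K` form a closed set. Let such rays `βᵢ` converge, along an ultrafilter,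
to an `N`-Morse ray `β`, and choose rays `γᵢ` of `Y` representing points of `K` with
`f ∘ γᵢ` at finite Hausdorff distance from `βᵢ`.

* Going along `f ∘ γᵢ` and then along a geodesic from an (almost) closest point to a far away
  point of `βᵢ` gives a quasi-geodesic with endpoints on `βᵢ` (`IsQG.concat`). As `βᵢ` is
  `N`-Morse, `f ∘ γᵢ` lies in a neighbourhood of `βᵢ` of radius independent of `i`
  (`near_of_morse`), and conversely (`near_converse`).
* As `Y` is proper, the `γᵢ` converge to a geodesic ray `γ`, uniformly on compact sets
  (`exists_limit_ray`, `tendsto_compactOpen`), and `f ∘ γ` is at finite Hausdorff distance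
  from `β` (`near_limit`).
* The Morse property of `βᵢ` and `β` pulls back under `f` to a common gauge `N'` for all `γᵢ`
  and `γ` (`MorseSet.pullback`). Thus `γᵢ → γ` inside a single stratum of `∂_M Y`, so
  `[γ] ∈ K'`; likewise `f ∘ γ` is Morse in `X`, so `[γ] ∈ K`, and `f_* [γ] = [β]`.
-/

open Set Filter Topology
open scoped ENNReal

namespace MorseGoG

/-! ## Metric notions relative to an explicit distance function

Throughout, distances are given by an explicit function `d : X → X → ℝ`, so that the same
notions apply to metric spaces (`d = dist`), to groups with word metrics, and to subgroups
with their own word metrics. -/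

variable {X : Type*}

/-- `γ` is a `C`-quasi-geodesic on the parameter set `I ⊆ ℝ` with respect to `d`:
`C ≥ 1` and `|s−t|/C − C ≤ d (γ s) (γ t) ≤ C|s−t| + C` for all `s, t ∈ I`. -/
def IsQG (d : X → X → ℝ) (C : ℝ) (I : Set ℝ) (γ : ℝ → X) : Prop :=
  1 ≤ C ∧ ∀ s ∈ I, ∀ t ∈ I,
    |s - t| / C - C ≤ d (γ s) (γ t) ∧ d (γ s) (γ t) ≤ C * |s - t| + C

/-- `x` lies in the (closed) `r`-neighbourhood of `A` with respect to `d`. -/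
def InNbhd (d : X → X → ℝ) (A : Set X) (r : ℝ) (x : X) : Prop :=
  ∃ a ∈ A, d x a ≤ r

/-- The set `A` (e.g. the image of a quasi-geodesic) is `N`-Morse with respect to `d`:
every `C`-quasi-geodesic segment with endpoints on `A` is contained in the
`N C`-neighbourhood of `A`. -/
def MorseSet (d : X → X → ℝ) (N : ℝ → ℝ) (A : Set X) : Prop :=
  ∀ C : ℝ, 1 ≤ C → ∀ a b : ℝ, a ≤ b → ∀ α : ℝ → X,
    IsQG d C (Set.Icc a b) α → α a ∈ A → α b ∈ A →
    ∀ t ∈ Set.Icc a b, InNbhd d A (N C) (α t)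

/-- `A` is Morse: it is `N`-Morse for some Morse gauge `N`. -/
def IsMorse (d : X → X → ℝ) (A : Set X) : Prop := ∃ N : ℝ → ℝ, MorseSet d N A

/-- A discrete geodesic ray: the sequence of vertices of a geodesic ray in a graph. -/
def IsGeodSeq (d : X → X → ℝ) (γ : ℕ → X) : Prop :=
  ∀ m n : ℕ, d (γ m) (γ n) = |(m : ℝ) - (n : ℝ)|

/-- A discrete geodesic segment of length `n`. -/
def IsGeodSeg (d : X → X → ℝ) (n : ℕ) (γ : ℕ → X) : Prop :=
  ∀ i ≤ n, ∀ j ≤ n, d (γ i) (γ j) = |(i : ℝ) - (j : ℝ)|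

/-- A discrete `C`-quasi-geodesic ray. -/
def IsQGSeq (d : X → X → ℝ) (C : ℝ) (γ : ℕ → X) : Prop :=
  1 ≤ C ∧ ∀ m n : ℕ,
    |(m : ℝ) - n| / C - C ≤ d (γ m) (γ n) ∧ d (γ m) (γ n) ≤ C * |(m : ℝ) - n| + C

/-- Two sets are at finite Hausdorff distance with respect to `d`. -/
def BddHD (d : X → X → ℝ) (A B : Set X) : Prop :=
  ∃ r : ℝ, (∀ a ∈ A, InNbhd d B r a) ∧ (∀ b ∈ B, InNbhd d A r b)

/-- A discrete edge path with `n` steps: consecutive points are at distance at most `1`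
(i.e. equal or joined by an edge, in a graph whose vertex set carries the metric `d`). -/
def IsEdgePath (d : X → X → ℝ) (n : ℕ) (c : ℕ → X) : Prop :=
  ∀ i < n, d (c i) (c (i + 1)) ≤ 1

/-- Combinatorial divergence of a discrete ray `γ` in a graph with vertex distance `d`:
the infimum, over `s ≥ r` and over edge paths joining `γ (s - r)` to `γ (s + r)` and
avoiding the ball of radius `ε·r` around `γ s`, of the length of the path. -/
noncomputable def gdivergence (d : X → X → ℝ) (γ : ℕ → X) (r : ℕ) (ε : ℝ) : ℝ≥0∞ :=
  ⨅ (s : ℕ) (_ : r ≤ s) (n : ℕ) (c : ℕ → X) (_ : IsEdgePath d n c)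
    (_ : c 0 = γ (s - r)) (_ : c n = γ (s + r))
    (_ : ∀ i ≤ n, ε * r < d (c i) (γ s)), (n : ℝ≥0∞)

/-! ## Geodesic metric spaces, geodesic rays, divergence -/

variable {Y : Type*} [MetricSpace Y]

/-- A geodesic metric space: any two points are joined by an isometrically parametrised path. -/
def IsGeodesicSpace (Y : Type*) [MetricSpace Y] : Prop :=
  ∀ x y : Y, ∃ γ : ℝ → Y, γ 0 = x ∧ γ (dist x y) = y ∧
    ∀ s ∈ Set.Icc 0 (dist x y), ∀ t ∈ Set.Icc 0 (dist x y), dist (γ s) (γ t) = |s - t|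

/-- A geodesic ray (defined on `[0,∞)` and extended constantly to negative times). -/
def IsGeodRay (γ : ℝ → Y) : Prop :=
  (∀ s t : ℝ, 0 ≤ s → 0 ≤ t → dist (γ s) (γ t) = |s - t|) ∧ ∀ t : ℝ, γ t = γ (max t 0)

theorem IsGeodRay.lipschitz {γ : ℝ → Y} (h : IsGeodRay γ) : LipschitzWith 1 γ := by
  apply LipschitzWith.of_dist_le_mul
  intro s t
  rw [h.2 s, h.2 t, h.1 _ _ (le_max_right s 0) (le_max_right t 0)]
  rw [NNReal.coe_one, one_mul, Real.dist_eq]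
  exact abs_max_sub_max_le_abs s t 0

/-- Divergence function `δ_γ(r, ε)` of a quasi-geodesic ray `γ` in a metric space:
the infimum of lengths (total variations) of paths connecting `γ (s - r)` to `γ (s + r)`
outside the closed ball `B(γ s, εr)`, over all `s ≥ r`. -/
noncomputable def divergence (γ : ℝ → Y) (r ε : ℝ) : ℝ≥0∞ :=
  ⨅ (s : ℝ) (_ : r ≤ s) (c : ℝ → Y) (_ : ContinuousOn c (Set.Icc 0 1))
    (_ : c 0 = γ (s - r)) (_ : c 1 = γ (s + r))
    (_ : ∀ t ∈ Set.Icc (0 : ℝ) 1, ε * r < dist (c t) (γ s)),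
    eVariationOn c (Set.Icc 0 1)

/-- Quasi-isometric embedding between sets carrying explicit distance functions. -/
def IsQIEmb {Z W : Type*} (dZ : Z → Z → ℝ) (dW : W → W → ℝ) (f : Z → W) : Prop :=
  ∃ C : ℝ, 1 ≤ C ∧ ∀ z z' : Z,
    dZ z z' / C - C ≤ dW (f z) (f z') ∧ dW (f z) (f z') ≤ C * dZ z z' + C

/-! ## The Morse boundary of a proper geodesic metric space -/

/-- A Morse geodesic ray based at `p` in the metric space `Y`. -/
structure MRay (Y : Type*) [MetricSpace Y] (p : Y) where
  ray : ℝ → Y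
  base : ray 0 = p
  geod : IsGeodRay ray
  morse : IsMorse dist (Set.range ray)

/-- Two rays are identified when they are at finite Hausdorff distance. -/
def mrayRel (p : Y) (x y : MRay Y p) : Prop :=
  BddHD dist (Set.range x.ray) (Set.range y.ray)

/-- The Morse boundary of a metric space, as a set: Morse geodesic rays based at `p`,
modulo finite Hausdorff distance. -/
def MorseBoundarySp (Y : Type*) [MetricSpace Y] (p : Y) : Type _ := Quot (mrayRel p)

/-- The `N`-Morse stratum: `N`-Morse geodesic rays based at `p`. -/
def NRaysSp (Y : Type*) [MetricSpace Y] (p : Y) (N : ℝ → ℝ) : Type _ :=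
  {γ : MRay Y p // MorseSet dist N (Set.range γ.ray)}

/-- Each stratum of rays carries the compact-open topology (as a set of continuous maps). -/
noncomputable instance NRaysSp.instTop (p : Y) (N : ℝ → ℝ) : TopologicalSpace (NRaysSp Y p N) :=
  TopologicalSpace.induced
    (fun γ => (⟨γ.1.ray, γ.1.geod.lipschitz.continuous⟩ : C(ℝ, Y))) inferInstance

/-- The Morse boundary carries the direct limit topology over all Morse gauges:
a set is open iff its intersection with each stratum `∂_M^N Y_p` is open there. -/
noncomputable instance MorseBoundarySp.instTop (p : Y) :
    TopologicalSpace (MorseBoundarySp Y p) :=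
  ⨆ N : ℝ → ℝ,
    TopologicalSpace.coinduced (fun γ : NRaysSp Y p N => Quot.mk (mrayRel p) γ.1) inferInstance

/-- The relative Morse boundary `(∂_M Y, f)` of a quasi-isometric embedding `f : Y → X`:
classes of Morse rays of `Y` whose image under `f` is Morse in `X`.  It is a subset of
`∂_M Y` (and carries the subspace topology). -/
def relBoundarySp {Y X : Type*} [MetricSpace Y] [MetricSpace X] (p : Y) (f : Y → X) :
    Set (MorseBoundarySp Y p) :=
  {ξ | ∃ γ : MRay Y p, Quot.mk (mrayRel p) γ = ξ ∧ IsMorse dist (f '' Set.range γ.ray)}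

/-! ## Word metrics and Morse boundaries of finitely generated groups -/

variable {G : Type*} [Group G]

/-- Word length of `g` with respect to the (symmetrised) alphabet `S`. -/
noncomputable def wordLength (S : Set G) (g : G) : ℕ :=
  sInf {n : ℕ | ∃ l : List G, l.length = n ∧ (∀ x ∈ l, x ∈ S ∨ x⁻¹ ∈ S) ∧ l.prod = g}

/-- Word metric on `G` with respect to `S`; this is the distance between vertices in the
Cayley graph `Cay(G, S)`. -/
noncomputable def wdist (S : Set G) (g h : G) : ℝ := wordLength S (g⁻¹ * h)

/-- A Morse geodesic ray in the Cayley graph of `(G, S)`, based at the identity,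
recorded by its sequence of vertices. -/
structure GRay (G : Type*) [Group G] (S : Set G) where
  seq : ℕ → G
  base : seq 0 = 1
  geod : IsGeodSeq (wdist S) seq
  morse : IsMorse (wdist S) (Set.range seq)

/-- Identification of rays at finite Hausdorff distance. -/
def grayRel (S : Set G) (x y : GRay G S) : Prop :=
  BddHD (wdist S) (Set.range x.seq) (Set.range y.seq)

/-- The Morse boundary `∂_M G` of the group `G` with finite generating set `S`. -/
def MorseBoundary (G : Type*) [Group G] (S : Set G) : Type _ := Quot (grayRel (G := G) S)

/-- The stratum of `N`-Morse rays. -/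
def NGRays (G : Type*) [Group G] (S : Set G) (N : ℝ → ℝ) : Type _ :=
  {γ : GRay G S // MorseSet (wdist S) N (Set.range γ.seq)}

/-- The compact-open topology on a stratum: for rays in a graph (vertex sequences) this is
the topology of pointwise convergence of the vertex sequences, `G` being discrete. -/
noncomputable instance NGRays.instTop (S : Set G) (N : ℝ → ℝ) :
    TopologicalSpace (NGRays G S N) :=
  TopologicalSpace.induced (fun γ => γ.1.seq)
    (@Pi.topologicalSpace ℕ (fun _ => G) (fun _ => ⊥))

/-- The direct limit topology on the Morse boundary of a group. -/
noncomputable instance MorseBoundary.instTop (S : Set G) :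
    TopologicalSpace (MorseBoundary G S) :=
  ⨆ N : ℝ → ℝ,
    TopologicalSpace.coinduced (fun γ : NGRays G S N => Quot.mk (grayRel S) γ.1) inferInstance

/-! ## Subgroups: undistortion, relative Morse boundaries -/

/-- `H` is finitely generated and undistorted in `(G, S)`: it has a finite generating set
whose word metric is bi-Lipschitz equivalent (suitably, quasi-isometric) to the metric
induced from `G`. -/
def FGUndistorted (S : Set G) (H : Subgroup G) : Prop :=
  ∃ T : Finset H, Subgroup.closure (T : Set H) = ⊤ ∧
    ∃ C : ℝ, 1 ≤ C ∧ ∀ h h' : H,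
      wdist (T : Set H) h h' ≤ C * wdist S (h : G) (h' : G) + C ∧
      wdist S (h : G) (h' : G) ≤ C * wdist (T : Set H) h h' + C

/-- The relative Morse boundary of `H` in `G` is empty, `(∂_M H, G) = ∅`:
no Morse geodesic ray of `H` (w.r.t. any finite generating set of `H`) remains Morse in `G`. -/
def RelMorseEmpty (S : Set G) (H : Subgroup G) : Prop :=
  ∀ T : Finset H, Subgroup.closure (T : Set H) = ⊤ →
    ∀ γ : ℕ → H, IsGeodSeq (wdist (T : Set H)) γ →
      IsMorse (wdist (T : Set H)) (Set.range γ) →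
      ¬ IsMorse (wdist S) (Set.range fun n => (γ n : G))

/-- The image of the natural injection `(∂_M H, G) ↪ ∂_M G`: those classes in `∂_M G`
having a representative ray staying at bounded distance from `H`. -/
def relBdryImage (S : Set G) (H : Subgroup G) : Set (MorseBoundary G S) :=
  {ξ | ∃ γ : GRay G S, Quot.mk (grayRel S) γ = ξ ∧
        ∃ r : ℝ, ∀ n : ℕ, ∃ h ∈ H, wdist S (γ.seq n) h ≤ r}

/-- The relative Morse boundary `(∂_M H, G)` as a subset of `∂_M H` (where `∂_M H` is
formed w.r.t. a generating set `T` of `H`): classes of rays that remain Morse in `G`. -/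
def relBdryIn (S : Set G) (H : Subgroup G) (T : Set H) : Set (MorseBoundary H T) :=
  {ξ | ∃ γ : GRay H T, Quot.mk (grayRel T) γ = ξ ∧
        IsMorse (wdist S) (Set.range fun n => (γ.seq n : G))}

/-- Specification of the natural map `∂_M H → ∂_M G` (or of its restriction to the relative
boundary): each class is sent to the class of a ray of `G` at finite Hausdorff distance
from the image of (a representative of) the given class. -/
def InclSpec (S : Set G) (H : Subgroup G) (TH : Set H)
    (F : MorseBoundary H TH → MorseBoundary G S) : Prop :=
  ∀ γ : GRay H TH, ∀ β : GRay G S,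
    Quot.mk (grayRel S) β = F (Quot.mk (grayRel TH) γ) →
    BddHD (wdist S) (Set.range fun n => ((γ.seq n : G))) (Set.range β.seq)

/-! ## Asymptotic cones and relatively wide subgroups -/

/-- Admissible sequences for an asymptotic cone: sequences at bounded rescaled distance
from the basepoints `o`. -/
def conePts (ω : Ultrafilter ℕ) (d : X → X → ℝ) (o : ℕ → X) (s : ℕ → ℝ) : Set (ℕ → X) :=
  {x | ∃ B : ℝ, ∀ᶠ n in (ω : Filter ℕ), d (o n) (x n) ≤ B * s n}

/-- The pseudo-distance of the asymptotic cone: ultralimit of the rescaled distances. -/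
noncomputable def coneDist (ω : Ultrafilter ℕ) (d : X → X → ℝ) (s : ℕ → ℝ)
    (x y : ℕ → X) : ℝ :=
  limUnder (ω : Filter ℕ) (fun n => d (x n) (y n) / s n)

/-- The topology of the asymptotic cone, as a topology on representative sequences:
generated by the open balls of the cone pseudo-distance. -/
noncomputable def coneTop (ω : Ultrafilter ℕ) (d : X → X → ℝ) (o : ℕ → X) (s : ℕ → ℝ) :
    TopologicalSpace (ℕ → X) :=
  TopologicalSpace.generateFrom
    {U | ∃ c ∈ conePts ω d o s, ∃ ε : ℝ, 0 < ε ∧ U = {x | coneDist ω d s c x < ε}}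

/-- `z` is a cut point of the asymptotic cone separating the points `x` and `y`:
`x, y` differ from `z` and do not lie in a common connected subset of the complement
of (the point represented by) `z`. -/
def ConeSeparates (ω : Ultrafilter ℕ) (d : X → X → ℝ) (o : ℕ → X) (s : ℕ → ℝ)
    (x y z : ℕ → X) : Prop :=
  coneDist ω d s x z ≠ 0 ∧ coneDist ω d s y z ≠ 0 ∧
  ¬ ∃ A : Set (ℕ → X),
      A ⊆ {w ∈ conePts ω d o s | coneDist ω d s w z ≠ 0} ∧ x ∈ A ∧ y ∈ A ∧
      @IsPreconnected (ℕ → X) (coneTop ω d o s) A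

/-- `H` is relatively wide in `(G, S)`: in every asymptotic cone of `G` (over a
non-principal ultrafilter, arbitrary basepoints and scaling factors tending to infinity),
no two limit points of `H` are separated by a cut point. -/
def RelativelyWide (S : Set G) (H : Subgroup G) : Prop :=
  ∀ ω : Ultrafilter ℕ, (ω : Filter ℕ) ≤ Filter.cofinite →
  ∀ (o : ℕ → G) (s : ℕ → ℝ), (∀ n, 0 < s n) → Tendsto s atTop atTop →
  ∀ x y z : ℕ → G, (∀ n, x n ∈ H) → (∀ n, y n ∈ H) →
    x ∈ conePts ω (wdist S) o s → y ∈ conePts ω (wdist S) o s →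
    z ∈ conePts ω (wdist S) o s →
    ¬ ConeSeparates ω (wdist S) o s x y z

/-- The subgroup `H ≤ V` is relatively wide in `V` (for any, equivalently some, finite
generating set of `V`). -/
def RelWideIn (V H : Subgroup G) : Prop :=
  ∀ SV : Finset V, Subgroup.closure (SV : Set V) = ⊤ →
    RelativelyWide (SV : Set V) (H.subgroupOf V)

/-! ## Actions on simplicial trees -/

variable {VT : Type*}

/-- `G` splits as a graph of groups: it acts on the simplicial tree `T`
(preserving adjacency), minimally, non-elliptically and without inversions. -/
def ActsOnTree (G : Type*) [Group G] {VT : Type*} (T : SimpleGraph VT) [MulAction G VT] :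
    Prop :=
  T.IsTree ∧
  (∀ (g : G) (a b : VT), T.Adj a b → T.Adj (g • a) (g • b)) ∧
  (∀ (g : G) (a b : VT), T.Adj a b → ¬(g • a = b ∧ g • b = a)) ∧
  (¬ ∃ v : VT, ∀ g : G, g • v = v) ∧
  (∀ W : Set VT, W.Nonempty → (∀ (g : G), ∀ v ∈ W, g • v ∈ W) →
    (∀ a ∈ W, ∀ b ∈ W, ∀ c : VT, T.dist a c + T.dist c b = T.dist a b → c ∈ W) →
    W = Set.univ)

/-- The stabiliser of the edge `{a, b}` (pointwise; for actions without inversions this is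
the full edge stabiliser). -/
def edgeStab (G : Type*) [Group G] {VT : Type*} [MulAction G VT] (a b : VT) : Subgroup G :=
  MulAction.stabilizer G a ⊓ MulAction.stabilizer G b

/-- The halfspace determined by the edge `{a, b}` containing `b`: one of the two connected
components of the complement of the open edge. -/
def halfspace {VT : Type*} (T : SimpleGraph VT) (a b : VT) : Set VT :=
  {v | T.dist v b < T.dist v a}

end MorseGoG

namespace MorseGoG

variable {G : Type*} [Group G] {VT : Type*}

/-- A choice of "edge subgraphs" `Γ(𝔢) ⊆ Γ` of the Cayley graph `Γ = Cay(G, S)`, one for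
each (unoriented) edge of the tree `T`, recorded by its vertex set `A a b ⊆ G`,
satisfying the properties of Lemma 3.2 (`AIS lem`).  Here `p` is the fixed base vertex of
`T` and `f_p(g) = g • p` is the orbit map. -/
structure EdgeSubgraphs (G : Type*) [Group G] (S : Set G) {VT : Type*} (T : SimpleGraph VT)
    [MulAction G VT] (p : VT) where
  /-- the vertex set of `Γ(𝔢)` for the edge `𝔢 = {a, b}` -/
  A : VT → VT → Set G
  /-- `Γ(𝔢)` only depends on the unoriented edge -/
  symm : ∀ a b : VT, A a b = A b a
  /-- (1) `Γ(𝔢)` is connected -/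
  conn : ∀ a b : VT, T.Adj a b → ∀ x ∈ A a b, ∀ y ∈ A a b,
    ∃ (n : ℕ) (c : ℕ → G), IsEdgePath (wdist S) n c ∧ c 0 = x ∧ c n = y ∧
      ∀ i ≤ n, c i ∈ A a b
  /-- (1) `Γ(𝔢)` is `G_𝔢`-invariant -/
  inva : ∀ a b : VT, T.Adj a b → ∀ g ∈ edgeStab G a b, ∀ x ∈ A a b, g * x ∈ A a b
  /-- (1) `Γ(𝔢)` is `G_𝔢`-cocompact -/
  cocpt : ∀ a b : VT, T.Adj a b →
    ∃ F : Finset G, ∀ x ∈ A a b, ∃ g ∈ edgeStab G a b, ∃ f ∈ F, x = g * f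
  /-- (2) equivariance: `Γ(g𝔢) = gΓ(𝔢)` -/
  equivariant : ∀ (g : G) (a b : VT), A (g • a) (g • b) = (fun x => g * x) '' A a b
  /-- (3) `Γ(𝔢)` contains every edge of `Γ` with one endpoint in `f_p⁻¹(𝔥)` and the other
  in `f_p⁻¹(𝔥*)` -/
  crossing : ∀ a b : VT, T.Adj a b → ∀ x y : G, wdist S x y = 1 →
    x • p ∈ halfspace T a b → y • p ∈ halfspace T b a → x ∈ A a b ∧ y ∈ A a b
  /-- (4) `N(f_p⁻¹(𝔥), r) ∩ N(f_p⁻¹(𝔥*), r) ⊆ N(Γ(𝔢), r)` -/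
  nbhd : ∀ a b : VT, T.Adj a b → ∀ r : ℝ, 0 ≤ r → ∀ x : G,
    (∃ y : G, y • p ∈ halfspace T a b ∧ wdist S x y ≤ r) →
    (∃ y : G, y • p ∈ halfspace T b a ∧ wdist S x y ≤ r) →
    ∃ z ∈ A a b, wdist S x z ≤ r
  /-- (5) each edge of `Γ` lies in `Γ(𝔢)` for only finitely many edges `𝔢` of `T` -/
  finmany : ∀ x y : G, wdist S x y = 1 →
    {e : VT × VT | T.Adj e.1 e.2 ∧ x ∈ A e.1 e.2 ∧ y ∈ A e.1 e.2}.Finite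

/-- The vertex set of `Γ(𝔥)` for the halfspace `𝔥` of the edge `{a,b}` containing `b`:
`f_p⁻¹(𝔥) ∖ Γ(𝔢)`. -/
def hsVerts (T : SimpleGraph VT) [MulAction G VT] (p : VT)
    (A : VT → VT → Set G) (a b : VT) : Set G :=
  {g : G | g • p ∈ halfspace T a b ∧ g ∉ A a b}

/-- `M(𝔥) ⊆ ∂_M G`: classes of rays eventually contained in `Γ(𝔥)`, for the halfspace `𝔥`
of the edge `{a,b}` containing `b`. -/
def Mset (S : Set G) (T : SimpleGraph VT) [MulAction G VT] (p : VT)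
    (A : VT → VT → Set G) (a b : VT) : Set (MorseBoundary G S) :=
  {ξ | ∃ γ : GRay G S, Quot.mk (grayRel S) γ = ξ ∧
        ∃ n₀ : ℕ, ∀ n ≥ n₀, γ.seq n ∈ hsVerts T p A a b}

end MorseGoG

namespace MorseGoG

/-! ### Elementary facts on rays and Hausdorff distance -/

section Helpers

variable {Y X : Type*} [MetricSpace Y] [MetricSpace X]

theorem InNbhd.mono {A : Set X} {r r' : ℝ} {x : X} (h : InNbhd dist A r x) (hr : r ≤ r') :
    InNbhd dist A r' x := by
  obtain ⟨a, ha, hd⟩ := h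
  exact ⟨a, ha, hd.trans hr⟩

theorem InNbhd.trans {A B : Set X} {r r' : ℝ} {x : X} (h : InNbhd dist A r x)
    (hAB : ∀ a ∈ A, InNbhd dist B r' a) : InNbhd dist B (r + r') x := by
  obtain ⟨a, ha, hd⟩ := h
  obtain ⟨b, hb, hd'⟩ := hAB a ha
  exact ⟨b, hb, (dist_triangle x a b).trans (add_le_add hd hd')⟩

theorem BddHD.symm {A B : Set X} (h : BddHD dist A B) : BddHD dist B A := by
  obtain ⟨r, h₁, h₂⟩ := h
  exact ⟨r, h₂, h₁⟩

theorem BddHD.trans {A B C : Set X} (h : BddHD dist A B) (h' : BddHD dist B C) :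
    BddHD dist A C := by
  obtain ⟨r, h₁, h₂⟩ := h
  obtain ⟨r', h₁', h₂'⟩ := h'
  exact ⟨r + r', fun a ha => (h₁ a ha).trans h₁',
    fun c hc => add_comm r' r ▸ (h₂' c hc).trans h₂⟩

theorem IsGeodRay.exists_nonneg {β : ℝ → X} (hβ : IsGeodRay β) {z : X} (hz : z ∈ range β) :
    ∃ s, 0 ≤ s ∧ β s = z := by
  obtain ⟨s, rfl⟩ := hz
  exact ⟨max s 0, le_max_right _ _, (hβ.2 s).symm⟩

/-- The image of a geodesic ray under a quasi-isometric embedding is a quasi-geodesic ray. -/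
theorem IsGeodRay.isQG_comp {γ : ℝ → Y} (hγ : IsGeodRay γ) {C : ℝ} (hC : 1 ≤ C) {f : Y → X}
    (hf : ∀ z z' : Y, dist z z' / C - C ≤ dist (f z) (f z') ∧
      dist (f z) (f z') ≤ C * dist z z' + C) :
    IsQG dist C (Ici 0) (f ∘ γ) := by
  refine ⟨hC, fun s hs t ht => ?_⟩
  have h := hf (γ s) (γ t)
  rw [hγ.1 s t hs ht] at h
  exact h

/-! ### Quasi-geodesic rays fellow-travelling a Morse ray -/

/-- A quasi-geodesic followed by a geodesic `g` from `α t` to a point `z` is again a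
quasi-geodesic, provided `α t` is, up to an error `1`, a point of `α` closest to `z`. -/
theorem IsQG.concat {C : ℝ} {α : ℝ → X} (hα : IsQG dist C (Ici 0) α) {z : X} {t : ℝ}
    (ht : 0 ≤ t) (hmin : ∀ s, 0 ≤ s → dist (α t) z ≤ dist (α s) z + 1)
    {g : ℝ → X} (g0 : g 0 = α t) (gz : g (dist (α t) z) = z)
    (hg : ∀ s ∈ Icc 0 (dist (α t) z), ∀ u ∈ Icc 0 (dist (α t) z),
      dist (g s) (g u) = |s - u|) :
    IsQG dist (3 * C) (Icc 0 (t + dist (α t) z))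
      (fun u => if u ≤ t then α u else g (u - t)) := by
  obtain ⟨hC, hα⟩ := hα
  set L := dist (α t) z with hL
  have hL0 : 0 ≤ L := dist_nonneg
  have hC0 : (0 : ℝ) < C := by linarith
  -- comparison of a point of `α` with a point of the geodesic
  have mixed : ∀ s u, 0 ≤ s → s ≤ t → t < u → u ≤ t + L →
      |s - u| / (3 * C) - 3 * C ≤ dist (α s) (g (u - t)) ∧
        dist (α s) (g (u - t)) ≤ 3 * C * |s - u| + 3 * C := by
    intro s u hs hst htu huL
    have hv : u - t ∈ Icc 0 L := ⟨by linarith, by linarith⟩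
    have e1 : dist (α t) (g (u - t)) = u - t := by
      rw [← g0, hg 0 ⟨le_rfl, hL0⟩ _ hv, zero_sub, abs_neg, abs_of_nonneg hv.1]
    have e2 : dist (g (u - t)) z = L - (u - t) := by
      have h := hg _ hv L ⟨hL0, le_rfl⟩
      rw [gz, abs_sub_comm, abs_of_nonneg (by linarith [hv.2])] at h
      exact h
    have h1 := hmin s hs
    have h2 := dist_triangle (α s) (g (u - t)) z
    have h3 := dist_triangle (α s) (α t) (g (u - t))
    have h4 := dist_triangle_right (α s) (α t) (g (u - t))
    obtain ⟨h5, h6⟩ := hα s hs t ht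
    rw [abs_sub_comm, abs_of_nonneg (by linarith : 0 ≤ t - s)] at h5 h6
    rw [abs_sub_comm, abs_of_nonneg (by linarith : 0 ≤ u - s)]
    have hCu : u - t ≤ C * (u - t) := le_mul_of_one_le_left hv.1 hC
    have hCs : 0 ≤ C * (u - s) := mul_nonneg hC0.le (by linarith)
    constructor
    · set D := dist (α s) (g (u - t))
      have hD : 0 ≤ D := dist_nonneg
      have h7 : t - s ≤ (2 * D + 1 + C) * C := by
        rw [← div_le_iff₀ hC0]; linarith
      rw [sub_le_iff_le_add, div_le_iff₀ (by positivity)]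
      nlinarith [mul_nonneg hD (sub_nonneg.2 hC)]
    · nlinarith
  refine ⟨by linarith, ?_⟩
  intro s hs u hu
  have widen : ∀ x y : ℝ, 0 ≤ x → x / C - C ≤ y ∧ y ≤ C * x + C →
      x / (3 * C) - 3 * C ≤ y ∧ y ≤ 3 * C * x + 3 * C := by
    intro x y hx ⟨h1, h2⟩
    have : x / (3 * C) ≤ x / C := div_le_div_of_nonneg_left hx hC0 (by linarith)
    constructor
    · linarith
    · nlinarith [mul_nonneg hC0.le hx]
  by_cases h1 : s ≤ t <;> by_cases h2 : u ≤ t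
  · simp only [h1, h2, if_true]
    exact widen _ _ (abs_nonneg _) (hα s hs.1 u hu.1)
  · simp only [h1, h2, if_true, if_false]
    exact mixed s u hs.1 h1 (not_le.1 h2) hu.2
  · simp only [h1, h2, if_true, if_false]
    rw [dist_comm, abs_sub_comm]
    exact mixed u s hu.1 h2 (not_le.1 h1) hs.2
  · simp only [h1, h2, if_false]
    rw [not_le] at h1 h2
    rw [hg _ ⟨by linarith, by linarith [hs.2]⟩ _ ⟨by linarith, by linarith [hu.2]⟩,
      sub_sub_sub_cancel_right]
    refine widen _ _ (abs_nonneg _) ⟨?_, ?_⟩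
    · have := div_le_self (abs_nonneg (s - u)) hC
      linarith
    · have := le_mul_of_one_le_left (abs_nonneg (s - u)) hC
      linarith

/-- A quasi-geodesic ray at finite distance from an `N`-Morse ray lies in a neighbourhood of
it whose radius depends only on `N` and the quasi-geodesic constant. -/
theorem near_of_morse (hX : IsGeodesicSpace X) {N : ℝ → ℝ} {β : ℝ → X} (hβ : IsGeodRay β)
    (hN : MorseSet dist N (range β)) {C : ℝ} {α : ℝ → X} (hα : IsQG dist C (Ici 0) α)
    (h0 : α 0 = β 0) {r : ℝ} (hr : ∀ z ∈ range β, InNbhd dist (α '' Ici 0) r z)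
    {t₀ : ℝ} (ht₀ : 0 ≤ t₀) : InNbhd dist (range β) (N (3 * C)) (α t₀) := by
  have hC := hα.1
  have hr0 : 0 ≤ r := by
    obtain ⟨a, -, ha⟩ := hr _ (mem_range_self 0)
    exact dist_nonneg.trans ha
  -- a point so far out on `β` that the point of `α` closest to it comes after time `t₀`
  set S := C * t₀ + C + r + 1 with hS
  have hS0 : 0 ≤ S := by have := mul_nonneg (by linarith : 0 ≤ C) ht₀; linarith
  set z := β S with hz
  obtain ⟨t, ht, hmin⟩ : ∃ t, 0 ≤ t ∧ ∀ s, 0 ≤ s → dist (α t) z ≤ dist (α s) z + 1 := by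
    have hne : ((fun s => dist (α s) z) '' Ici 0).Nonempty := ⟨_, 0, le_refl (0 : ℝ), rfl⟩
    obtain ⟨_, ⟨t, ht, rfl⟩, hlt⟩ := Real.lt_sInf_add_pos hne one_pos
    refine ⟨t, ht, fun s hs => ?_⟩
    have : sInf ((fun s => dist (α s) z) '' Ici 0) ≤ dist (α s) z :=
      csInf_le ⟨0, by rintro _ ⟨s, -, rfl⟩; exact dist_nonneg⟩ ⟨s, hs, rfl⟩
    linarith
  have htt : t₀ ≤ t := by
    obtain ⟨_, ⟨s, hs, rfl⟩, hd⟩ := hr z (mem_range_self S)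
    have h1 := hmin s hs
    rw [dist_comm] at hd
    have h2 := (hα.2 t ht 0 (le_refl (0 : ℝ))).2
    rw [sub_zero, abs_of_nonneg ht] at h2
    have h3 := dist_triangle_left (α 0) z (α t)
    rw [h0, hz, hβ.1 0 S le_rfl hS0, zero_sub, abs_neg, abs_of_nonneg hS0, ← h0] at h3
    have h4 : C * t₀ ≤ C * t := by linarith
    exact le_of_mul_le_mul_left h4 (by linarith)
  obtain ⟨g, g0, gz, hg⟩ := hX (α t) z
  have hL0 : 0 ≤ dist (α t) z := dist_nonneg
  have key := hN (3 * C) (by linarith) 0 (t + dist (α t) z) (by linarith) _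
    (hα.concat ht hmin g0 gz hg) ?_ ?_ t₀ ⟨ht₀, by linarith⟩
  · simpa only [htt, if_true] using key
  · simp only [ht, if_true, h0]
    exact mem_range_self 0
  · by_cases h : t + dist (α t) z ≤ t
    · have : dist (α t) z = 0 := le_antisymm (by linarith) hL0
      simp only [this, add_zero, le_refl, if_true]
      rw [dist_eq_zero.1 this]
      exact mem_range_self S
    · simp only [h, if_false, add_sub_cancel_left, gz]
      exact mem_range_self S

/-- If a quasi-geodesic ray `α` stays in the `D`-neighbourhood of a geodesic ray `β` with the
same origin, then `β` is near `α` as well: the times at which `β` is close to `α 0, α 1, …`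
tend to infinity with bounded jumps. -/
theorem near_converse {β : ℝ → X} (hβ : IsGeodRay β) {C : ℝ} {α : ℝ → X}
    (hα : IsQG dist C (Ici 0) α) (h0 : α 0 = β 0) {D : ℝ}
    (hD : ∀ t, 0 ≤ t → InNbhd dist (range β) D (α t)) :
    ∀ z ∈ range β, InNbhd dist (range α) (3 * D + 2 * C) z := by
  intro z hz
  obtain ⟨s, hs, rfl⟩ := hβ.exists_nonneg hz
  obtain ⟨hC, hα⟩ := hα
  have hex : ∀ i : ℕ, ∃ u, 0 ≤ u ∧ dist (α i) (β u) ≤ D := by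
    intro i
    obtain ⟨w, hw, hd⟩ := hD i i.cast_nonneg
    obtain ⟨u, hu, rfl⟩ := hβ.exists_nonneg hw
    exact ⟨u, hu, hd⟩
  choose σ hσ0 hσ using hex
  have hD0 : 0 ≤ D := dist_nonneg.trans (hσ 0)
  have hunb : ∃ i, s ≤ σ i := by
    obtain ⟨i, hi⟩ := exists_nat_ge (C * (s + D + C))
    refine ⟨i, ?_⟩
    have h1 := (hα i (mem_Ici.2 i.cast_nonneg) 0 (le_refl (0 : ℝ))).1
    rw [sub_zero, abs_of_nonneg (Nat.cast_nonneg i), h0] at h1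
    have h2 := dist_triangle (α i) (β (σ i)) (β 0)
    rw [hβ.1 _ _ (hσ0 i) le_rfl, sub_zero, abs_of_nonneg (hσ0 i)] at h2
    have h3 : s + D + C ≤ i / C := by
      rw [le_div_iff₀ (by linarith)]; linarith
    linarith [hσ i]
  classical
  have hfs := Nat.find_spec hunb
  have hfm := fun {m} => Nat.find_min (m := m) hunb
  generalize Nat.find hunb = i at hfs hfm
  refine ⟨α i, mem_range_self _, ?_⟩
  rcases i with _ | j
  · have h1 := hσ 0
    simp only [Nat.cast_zero] at h1 ⊢
    rw [h0, hβ.1 _ _ le_rfl (hσ0 0), zero_sub, abs_neg, abs_of_nonneg (hσ0 0)] at h1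
    rw [h0, hβ.1 _ _ hs le_rfl, sub_zero, abs_of_nonneg hs]
    linarith
  · have h1 : σ j < s := not_le.1 (hfm (Nat.lt_succ_self j))
    have h2 := (hα j (mem_Ici.2 j.cast_nonneg) (j + 1 : ℕ) (mem_Ici.2 (j + 1).cast_nonneg)).2
    have h3 : |(j : ℝ) - ((j + 1 : ℕ) : ℝ)| = 1 := by
      push_cast
      rw [sub_add_cancel_left, abs_neg, abs_one]
    rw [h3, mul_one] at h2
    have h4 := dist_triangle4 (β (σ (j + 1))) (α (j + 1 : ℕ)) (α j) (β (σ j))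
    rw [hβ.1 _ _ (hσ0 _) (hσ0 _), abs_of_nonneg (by linarith)] at h4
    have h5 := dist_triangle (β s) (β (σ (j + 1))) (α (j + 1 : ℕ))
    rw [hβ.1 _ _ hs (hσ0 _), abs_sub_comm, abs_of_nonneg (by linarith)] at h5
    have h6 := hσ (j + 1)
    have h7 := hσ j
    rw [dist_comm] at h6
    rw [dist_comm (α ((j + 1 : ℕ) : ℝ)) (α j)] at h4
    linarith

/-- The Morse property pulls back along a quasi-isometric embedding `f`: if `f '' B` is at
finite Hausdorff distance from an `N`-Morse set, then `B` is Morse, with a gauge depending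
only on `N` and the constants.  A quasi-geodesic with endpoints on `B` is mapped to `X` and
moved by at most `D` so that its endpoints land on `A`. -/
theorem MorseSet.pullback {N : ℝ → ℝ} {A : Set X} (hA : MorseSet dist N A) {B : Set Y}
    {C : ℝ} (hC : 1 ≤ C) {f : Y → X}
    (hf : ∀ z z' : Y, dist z z' / C - C ≤ dist (f z) (f z') ∧
      dist (f z) (f z') ≤ C * dist z z' + C)
    {D E : ℝ} (hD : ∀ b ∈ B, InNbhd dist A D (f b))
    (hE : ∀ a ∈ A, InNbhd dist (f '' B) E a) :
    MorseSet dist (fun c => C * (D + N (C * c + C + c + 2 * D) + E + C)) B := by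
  intro c hc a b hab η hη ha hb t ht
  have hC0 : (0 : ℝ) < C := by linarith
  have hc0 : (0 : ℝ) < c := by linarith
  have hD0 : 0 ≤ D := by
    obtain ⟨_, -, h⟩ := hD _ ha
    exact dist_nonneg.trans h
  obtain ⟨σ, hσ, hσA⟩ : ∃ σ : ℝ → X, (∀ u, dist (f (η u)) (σ u) ≤ D) ∧
      ∀ u, η u ∈ B → σ u ∈ A := by
    have : ∀ u, ∃ w, dist (f (η u)) w ≤ D ∧ (η u ∈ B → w ∈ A) := by
      intro u
      by_cases hu : η u ∈ B
      · obtain ⟨w, hw, hd⟩ := hD _ hu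
        exact ⟨w, hd, fun _ => hw⟩
      · exact ⟨f (η u), by rwa [dist_self], fun h => absurd h hu⟩
    choose σ h1 h2 using this
    exact ⟨σ, h1, h2⟩
  have hCc : 0 < C * c := mul_pos hC0 hc0
  have hqg : IsQG dist (C * c + C + c + 2 * D) (Icc a b) σ := by
    refine ⟨by linarith, fun s hs u hu => ?_⟩
    obtain ⟨h1, h2⟩ := hη.2 s hs u hu
    obtain ⟨h3, h4⟩ := hf (η s) (η u)
    have h5 := dist_triangle4 (f (η s)) (σ s) (σ u) (f (η u))
    have h6 := dist_triangle4 (σ s) (f (η s)) (f (η u)) (σ u)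
    have h7 := hσ s
    have h8 := hσ u
    rw [dist_comm (σ s) (f (η s))] at h6
    rw [dist_comm (σ u) (f (η u))] at h5
    have hx := abs_nonneg (s - u)
    constructor
    · have h9 : |s - u| / (C * c + C + c + 2 * D) ≤ |s - u| / (C * c) :=
        div_le_div_of_nonneg_left hx hCc (by linarith)
      have h10 : |s - u| / (C * c) - c ≤ dist (η s) (η u) / C := by
        have : (|s - u| / c - c) / C ≤ dist (η s) (η u) / C := by gcongr
        have e : (|s - u| / c - c) / C = |s - u| / (C * c) - c / C := by field_simp
        have := div_le_self hc0.le hC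
        linarith
      linarith
    · have h9 : C * dist (η s) (η u) ≤ C * (c * |s - u| + c) := by gcongr
      nlinarith [mul_nonneg (by linarith : 0 ≤ C + c + 2 * D) hx]
  obtain ⟨w, hw, hd⟩ := hA _ hqg.1 a b hab σ hqg (hσA a ha) (hσA b hb) t ht
  obtain ⟨_, ⟨y, hy, rfl⟩, hd'⟩ := hE w hw
  refine ⟨y, hy, ?_⟩
  have h1 := dist_triangle4 (f (η t)) (σ t) w (f y)
  have h2 := (hf (η t) y).1
  have h3 := hσ t
  have h4 : dist (η t) y / C ≤ D + N (C * c + C + c + 2 * D) + E + C := by linarith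
  rwa [div_le_iff₀' hC0] at h4

/-! ### Limits of geodesic rays -/

/-- In a proper space, geodesic rays from a common origin converge pointwise, along any
ultrafilter, to a geodesic ray. -/
theorem exists_limit_ray [ProperSpace Y] {ι : Type*} (L : Ultrafilter ι) (p : Y)
    (γ : ι → ℝ → Y) (hγ : ∀ i, IsGeodRay (γ i)) (h0 : ∀ i, γ i 0 = p) :
    ∃ γ' : ℝ → Y, IsGeodRay γ' ∧ γ' 0 = p ∧ ∀ t, Tendsto (fun i => γ i t) L (𝓝 (γ' t)) := by
  have hlim : ∀ t, ∃ y, Tendsto (fun i => γ i t) L (𝓝 y) := by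
    intro t
    have hmem : ∀ i, γ i t ∈ Metric.closedBall p |t| := by
      intro i
      rw [Metric.mem_closedBall, ← h0 i]
      simpa using (hγ i).lipschitz.dist_le_mul t 0
    obtain ⟨y, -, hy⟩ := isCompact_iff_ultrafilter_le_nhds'.1
      (isCompact_closedBall p |t|) (L.map fun i => γ i t)
      (show (fun i => γ i t) ⁻¹' Metric.closedBall p |t| ∈ L from univ_mem' hmem)
    exact ⟨y, hy⟩
  choose γ' hγ' using hlim
  refine ⟨γ', ⟨fun s t hs ht => ?_, fun t => ?_⟩, ?_, hγ'⟩
  · refine tendsto_nhds_unique ((hγ' s).dist (hγ' t)) ?_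
    simp only [(hγ _).1 s t hs ht]
    exact tendsto_const_nhds
  · refine tendsto_nhds_unique (hγ' t) ?_
    simp only [(hγ _).2 t]
    exact hγ' _
  · refine tendsto_nhds_unique (hγ' 0) ?_
    simp only [h0]
    exact tendsto_const_nhds

/-- Pointwise convergence of geodesic rays implies convergence in the compact-open topology,
geodesic rays being equicontinuous. -/
theorem tendsto_compactOpen {ι : Type*} {L : Filter ι} {γ : ι → ℝ → Y} {γ' : ℝ → Y}
    (hγ : ∀ i, IsGeodRay (γ i)) (hγ' : IsGeodRay γ')
    (h : ∀ t, Tendsto (fun i => γ i t) L (𝓝 (γ' t))) :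
    Tendsto (fun i => (⟨γ i, (hγ i).lipschitz.continuous⟩ : C(ℝ, Y))) L
      (𝓝 ⟨γ', hγ'.lipschitz.continuous⟩) := by
  rw [ContinuousMap.tendsto_iff_forall_isCompact_tendstoUniformlyOn]
  have heq : Equicontinuous γ :=
    (LipschitzWith.uniformEquicontinuous γ 1 fun i => (hγ i).lipschitz).equicontinuous
  have h1 := (EquicontinuousOn.tendsto_uniformOnFun_iff_pi (𝔖 := {K : Set ℝ | IsCompact K})
    (fun K hK => hK) (sUnion_eq_univ_iff.2 fun t => ⟨{t}, isCompact_singleton, rfl⟩)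
    (fun K _ => heq.equicontinuousOn K) L γ').2 (tendsto_pi_nhds.2 h)
  rw [UniformOnFun.tendsto_iff_tendstoUniformlyOn] at h1
  exact fun K hK => h1 K hK

/-- If the points `x i` are eventually within `R` of `x'`, and each `x i` lies in the
`D`-neighbourhood of a geodesic ray `β i`, then `x'` is near the pointwise limit `β'` of the
rays `β i`. -/
theorem near_limit {ι : Type*} {L : Ultrafilter ι} {β : ι → ℝ → X} {β' : ℝ → X}
    (hβ : ∀ i, IsGeodRay (β i)) (hβlim : ∀ t, Tendsto (fun i => β i t) L (𝓝 (β' t)))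
    {q : X} (hq : ∀ i, β i 0 = q) {D R : ℝ} {x : ι → X} {x' : X}
    (hx : ∀ i, InNbhd dist (range (β i)) D (x i)) (hR : ∀ᶠ i in L, dist x' (x i) ≤ R) :
    InNbhd dist (range β') (R + D + 1) x' := by
  have hex : ∀ i, ∃ u, 0 ≤ u ∧ dist (x i) (β i u) ≤ D := by
    intro i
    obtain ⟨w, hw, hd⟩ := hx i
    obtain ⟨u, hu, rfl⟩ := (hβ i).exists_nonneg hw
    exact ⟨u, hu, hd⟩
  choose σ hσ0 hσ using hex
  -- the times `σ i` are bounded, hence converge along the ultrafilter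
  have hbd : ∀ᶠ i in L, σ i ∈ Icc 0 (D + R + dist x' q) := by
    filter_upwards [hR] with i hi
    refine ⟨hσ0 i, ?_⟩
    have h1 := dist_triangle4 (β i (σ i)) (x i) x' (β i 0)
    rw [(hβ i).1 _ _ (hσ0 i) le_rfl, sub_zero, abs_of_nonneg (hσ0 i), hq,
      dist_comm _ (x i), dist_comm (x i) x'] at h1
    linarith [hσ i]
  obtain ⟨s, hs, hsL⟩ := isCompact_iff_ultrafilter_le_nhds'.1 isCompact_Icc (L.map σ) hbd
  have hsL' : Tendsto σ L (𝓝 s) := hsL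
  have e1 : ∀ᶠ i in L, dist (σ i) s < 1 / 2 :=
    hsL'.eventually (Metric.ball_mem_nhds s (by norm_num))
  have e2 : ∀ᶠ i in L, dist (β i s) (β' s) < 1 / 2 :=
    (hβlim s).eventually (Metric.ball_mem_nhds _ (by norm_num))
  obtain ⟨i, h1, h2, h3⟩ := (e1.and (e2.and hR)).exists
  refine ⟨β' s, mem_range_self s, ?_⟩
  have h4 := dist_triangle4 x' (x i) (β i (σ i)) (β' s)
  have h5 := dist_triangle (β i (σ i)) (β i s) (β' s)
  have h6 : dist (β i (σ i)) (β i s) ≤ dist (σ i) s := by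
    simpa using (hβ i).lipschitz.dist_le_mul (σ i) s
  linarith [hσ i]

end Helpers

/-! ### The boundary map -/

/-- **Lemma 2.2** (Statement 4).  If `f : Y → X` is a quasi-isometric embedding of proper
geodesic metric spaces, then the induced injection `f_* : (∂_M Y, f) → ∂_M X` is a closed
map.  The map `f_*` is specified by its defining property: it sends a class to the class of
a ray at finite Hausdorff distance from the `f`-image of any representative. -/
theorem relative_boundary_map_isClosedMap
    {Y X : Type*} [MetricSpace Y] [MetricSpace X] [ProperSpace Y] [ProperSpace X]
    (hY : IsGeodesicSpace Y) (hX : IsGeodesicSpace X)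
    (f : Y → X) (hf : IsQIEmb dist dist f) (p : Y)
    (F : relBoundarySp p f → MorseBoundarySp X (f p))
    (hF : ∀ ξ : relBoundarySp p f, ∀ γ : MRay Y p,
      Quot.mk (mrayRel p) γ = (ξ : MorseBoundarySp Y p) →
      ∀ β : MRay X (f p), Quot.mk (mrayRel (f p)) β = F ξ →
      BddHD dist (f '' Set.range γ.ray) (Set.range β.ray)) :
    IsClosedMap F := by
  obtain ⟨C, hC, hf⟩ := hf
  intro K hK
  obtain ⟨K', hK', rfl⟩ := isClosed_induced_iff.1 hK
  refine isClosed_iSup_iff.2 fun N => ?_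
  refine isClosed_coinduced.2 ?_
  refine isClosed_of_closure_subset fun β hβ => ?_
  -- a closure point of a set `S` is the limit of an ultrafilter `L` on `S`
  rw [mem_closure_iff_comap_neBot] at hβ
  set S : Set (NRaysSp X (f p) N) :=
    (fun γ : NRaysSp X (f p) N => Quot.mk (mrayRel (f p)) γ.1) ⁻¹' (F '' (Subtype.val ⁻¹' K'))
  let L : Ultrafilter S := @Ultrafilter.of _ (comap (Subtype.val : S → _) (𝓝 β)) hβ
  have hL : Tendsto (Subtype.val : S → _) L (𝓝 β) :=
    tendsto_comap.mono_left (@Ultrafilter.of_le _ _ hβ)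
  have hβlim : ∀ t, Tendsto (fun i : S => i.1.1.ray t) L (𝓝 (β.1.ray t)) := by
    intro t
    have h1 : Continuous (fun γ : NRaysSp X (f p) N =>
        (⟨γ.1.ray, γ.1.geod.lipschitz.continuous⟩ : C(ℝ, X))) := continuous_induced_dom
    have h2 : Continuous (fun γ : NRaysSp X (f p) N => γ.1.ray t) :=
      (continuous_eval_const t).comp h1
    exact (h2.tendsto β).comp hL
  have hex : ∀ i : S, ∃ γ : MRay Y p, Quot.mk (mrayRel p) γ ∈ K' ∧
      BddHD dist (f '' range γ.ray) (range i.1.1.ray) := by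
    rintro ⟨b, ξ, hξ, hFξ⟩
    obtain ⟨γ, hγ, -⟩ := ξ.2
    exact ⟨γ, hγ ▸ hξ, hF ξ γ hγ b.1 hFξ.symm⟩
  choose γ hγK hγβ using hex
  have hnear : ∀ (i : S) (t : ℝ), 0 ≤ t →
      InNbhd dist (range i.1.1.ray) (N (3 * C)) (f ((γ i).ray t)) := by
    intro i t ht
    obtain ⟨r, -, hr⟩ := hγβ i
    refine near_of_morse hX i.1.1.geod i.1.2 ((γ i).geod.isQG_comp hC hf)
      (by rw [Function.comp_apply, (γ i).base, i.1.1.base]) (r := r) ?_ ht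
    intro z hz
    obtain ⟨_, ⟨w, hw, rfl⟩, hd⟩ := hr z hz
    obtain ⟨u, hu, rfl⟩ := (γ i).geod.exists_nonneg hw
    exact ⟨_, ⟨u, hu, rfl⟩, hd⟩
  obtain ⟨γ', hγ'geod, hγ'0, hγ'lim⟩ := exists_limit_ray L p (fun i => (γ i).ray)
    (fun i => (γ i).geod) (fun i => (γ i).base)
  -- a common constant for the rays `γ i` and for their limit
  set D := C * 1 + C + N (3 * C) + 1 with hD
  have hnear' : ∀ t, 0 ≤ t → InNbhd dist (range β.1.ray) D (f (γ' t)) := by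
    intro t ht
    refine near_limit (L := L) (β := fun i : S => i.1.1.ray) (x := fun i => f ((γ i).ray t))
      (fun i => i.1.1.geod) hβlim (fun i => i.1.1.base) (fun i => hnear i t ht) ?_
    have e : ∀ᶠ i in (L : Filter S), dist ((γ i).ray t) (γ' t) < 1 :=
      (hγ'lim t).eventually (Metric.ball_mem_nhds _ one_pos)
    filter_upwards [e] with i hi
    rw [dist_comm] at hi
    refine (hf _ _).2.trans ?_
    gcongr
  have hball : ∀ {g : ℝ → Y} {b : ℝ → X}, IsGeodRay g →
      (∀ t, 0 ≤ t → InNbhd dist (range b) D (f (g t))) →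
      ∀ y ∈ range g, InNbhd dist (range b) D (f y) := by
    intro g b hg h y hy
    obtain ⟨u, hu, rfl⟩ := hg.exists_nonneg hy
    exact h u hu
  have hconv : ∀ {g : ℝ → Y} {b : MRay X (f p)}, IsGeodRay g → g 0 = p →
      (∀ t, 0 ≤ t → InNbhd dist (range b.ray) D (f (g t))) →
      ∀ z ∈ range b.ray, InNbhd dist (f '' range g) (3 * D + 2 * C) z := by
    intro g b hg hg0 h z hz
    rw [← range_comp]
    exact near_converse b.geod (hg.isQG_comp hC hf)
      (by rw [Function.comp_apply, hg0, b.base]) h z hz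
  have hnearD : ∀ (i : S) (t : ℝ), 0 ≤ t →
      InNbhd dist (range i.1.1.ray) D (f ((γ i).ray t)) :=
    fun i t ht => (hnear i t ht).mono (by linarith)
  -- all the `γ i` and `γ'` are Morse with the same gauge
  set N' : ℝ → ℝ := fun c =>
    C * (D + N (C * c + C + c + 2 * D) + (3 * D + 2 * C) + C) with hN'
  have hγM : ∀ i : S, MorseSet dist N' (range (γ i).ray) := fun i =>
    i.1.2.pullback hC hf (hball (γ i).geod (hnearD i))
      (hconv (γ i).geod (γ i).base (hnearD i))
  have hγ'M : MorseSet dist N' (range γ') :=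
    β.2.pullback hC hf (hball hγ'geod hnear') (hconv hγ'geod hγ'0 hnear')
  let Γ : MRay Y p := ⟨γ', hγ'0, hγ'geod, N', hγ'M⟩
  have hΓβ : BddHD dist (f '' range Γ.ray) (range β.1.ray) := by
    refine ⟨max D (3 * D + 2 * C), ?_, fun z hz =>
      (hconv hγ'geod hγ'0 hnear' z hz).mono (le_max_right _ _)⟩
    rintro _ ⟨y, hy, rfl⟩
    exact (hball hγ'geod hnear' y hy).mono (le_max_left _ _)
  have hΓM : IsMorse dist (f '' range Γ.ray) := by
    obtain ⟨r, h1, h2⟩ := hΓβ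
    refine ⟨_, β.2.pullback (f := id) le_rfl (fun z z' => ⟨?_, ?_⟩) h1
      (by rwa [image_id])⟩
    · simp only [id, div_one]; linarith
    · simp only [id, one_mul]; linarith
  have hΓK : Quot.mk (mrayRel p) Γ ∈ K' := by
    have hcl := isClosed_coinduced.1 (isClosed_iSup_iff.1 hK' N')
    let g : S → NRaysSp Y p N' := fun i => ⟨γ i, hγM i⟩
    let Γ' : NRaysSp Y p N' := ⟨Γ, hγ'M⟩
    have hind : IsInducing (fun b : NRaysSp Y p N' =>
        (⟨b.1.ray, b.1.geod.lipschitz.continuous⟩ : C(ℝ, Y))) := ⟨rfl⟩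
    have ht : Tendsto g L (𝓝 Γ') :=
      hind.tendsto_nhds_iff.2 (tendsto_compactOpen (fun i => (γ i).geod) hγ'geod hγ'lim)
    exact hcl.mem_of_tendsto ht (Eventually.of_forall hγK)
  let ξ : relBoundarySp p f := ⟨Quot.mk _ Γ, Γ, rfl, hΓM⟩
  refine ⟨ξ, hΓK, ?_⟩
  obtain ⟨β', hβ'⟩ := Quot.exists_rep (F ξ)
  rw [← hβ']
  exact Quot.sound ((hF ξ Γ rfl β' hβ').symm.trans hΓβ)

end MorseGoG
end

section
/- Let X be a proper geodesic metric space. Given constants L ≥ 1, 0 < ε < 1/(4L), and a Morse gauge N, there exists a weakly increasing function f : [0,∞) → [0,∞) with f(r) → ∞ as r → ∞ such that every N-Morse L-quasi-geodesic ray γ in X satisfies δ_γ(r, ε) ≥ r·f(r) for all r ≥ 0. -/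
/-!
Fix `K`. A path `c` of length less than `K r` from `γ (s - r)` to `γ (s + r)` outside the ball
`B(γ s, ε r)` can be sampled at `M + 1` points with consecutive distances at most `ε r / 2`, where
`M` depends only on `K` and `ε` (`exists_chain`). A chain of `M + 1` points can be turned into a
quasi-geodesic between its ends whose constant depends only on `M` and which stays as close to the
chain as the step size allows (`exists_qg_of_chain`): to add a point `z` to a quasi-geodesic `α`,
cut `α` at an almost nearest point to `z` and continue along a geodesic to `z` (`qg_extend`).
This quasi-geodesic has its endpoints on `γ`, so it lies in a bounded neighbourhood of `γ`, and
since it is coarsely connected it must pass within bounded distance of `γ s`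
(`qg_passes_near`). As it also avoids a ball of radius about `ε r / 2` around `γ s`, the radius `r`
is bounded in terms of `K`, `L`, `ε` and `N` (`eventually_le_divergence`). Hence `δ_γ(r, ε) ≥ K r`
for all large `r`, uniformly in `γ`, and `f r` is the largest natural number `K ≤ r` for which
this bound holds from `r` onwards.
-/

open Set Filter Topology
open scoped ENNReal

namespace MorseGoG

section Divergence

variable {X : Type*} [MetricSpace X]

/-- Cutting a quasi-geodesic at an almost nearest point `α t₀` to `z` and continuing along a
geodesic `σ` from `α t₀` to `z` yields a quasi-geodesic. For `x` before the cut and `y` on `σ`,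
almost minimality gives `dist x y ≥ dist (α t₀) y - 1`, which controls both parts of the
parameter distance. -/
theorem qg_extend {C a t₀ : ℝ} {α σ : ℝ → X} {z : X} (hα : IsQG dist C (Icc 0 a) α)
    (ht₀ : t₀ ∈ Icc 0 a) (hmin : ∀ t ∈ Icc 0 a, dist (α t₀) z ≤ dist (α t) z + 1)
    (hσ0 : σ 0 = α t₀) (hσ1 : σ (dist (α t₀) z) = z)
    (hσ : ∀ s ∈ Icc 0 (dist (α t₀) z), ∀ t ∈ Icc 0 (dist (α t₀) z),
      dist (σ s) (σ t) = |s - t|) :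
    IsQG dist (2 * C + 1) (Icc 0 (t₀ + dist (α t₀) z))
      (fun t => if t ≤ t₀ then α t else σ (t - t₀)) := by
  obtain ⟨hC, hα⟩ := hα
  obtain ⟨h0, h1⟩ := ht₀
  set D := dist (α t₀) z with hD
  have hD0 : 0 ≤ D := dist_nonneg
  have hC' : 0 < 2 * C + 1 := by linarith
  refine ⟨by linarith, ?_⟩
  -- By symmetry it is enough to treat `s ≤ t`.
  have key : ∀ s ∈ Icc 0 (t₀ + D), ∀ t ∈ Icc 0 (t₀ + D), s ≤ t →
      (t - s) / (2 * C + 1) - (2 * C + 1) ≤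
        dist (if s ≤ t₀ then α s else σ (s - t₀)) (if t ≤ t₀ then α t else σ (t - t₀)) ∧
      dist (if s ≤ t₀ then α s else σ (s - t₀)) (if t ≤ t₀ then α t else σ (t - t₀)) ≤
        (2 * C + 1) * (t - s) + (2 * C + 1) := by
    intro s hs t ht hst
    rw [sub_le_iff_le_add, div_le_iff₀ hC']
    by_cases hst₀ : t ≤ t₀
    · have hs' : s ≤ t₀ := hst.trans hst₀
      simp only [hst₀, hs', if_true]
      obtain ⟨hl, hu⟩ := hα s ⟨hs.1, hs'.trans h1⟩ t ⟨ht.1, hst₀.trans h1⟩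
      rw [abs_sub_comm, abs_of_nonneg (by linarith)] at hl hu
      rw [sub_le_iff_le_add, div_le_iff₀ (by linarith)] at hl
      have hd : 0 ≤ dist (α s) (α t) := dist_nonneg
      constructor <;> nlinarith
    · push Not at hst₀
      by_cases hs' : s ≤ t₀
      · simp only [not_le.2 hst₀, hs', if_true, if_false]
        obtain ⟨hl, hu⟩ := hα s ⟨hs.1, hs'.trans h1⟩ t₀ ⟨h0, h1⟩
        rw [abs_sub_comm, abs_of_nonneg (by linarith)] at hl hu
        rw [sub_le_iff_le_add, div_le_iff₀ (by linarith)] at hl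
        have hy : dist (α t₀) (σ (t - t₀)) = t - t₀ := by
          rw [← hσ0, hσ 0 ⟨le_rfl, hD0⟩ (t - t₀) ⟨by linarith, by linarith [ht.2]⟩,
            abs_sub_comm, abs_of_nonneg (by linarith)]
          ring
        have hz : dist (σ (t - t₀)) z = D - (t - t₀) := by
          conv_lhs => rw [← hσ1]
          rw [hσ (t - t₀) ⟨by linarith, by linarith [ht.2]⟩ D ⟨hD0, le_rfl⟩,
            abs_sub_comm, abs_of_nonneg (by linarith [ht.2])]
        have hm := hmin s ⟨hs.1, hs'.trans h1⟩
        have t1 := dist_triangle (α s) (σ (t - t₀)) z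
        have t2 := dist_triangle (α s) (α t₀) (σ (t - t₀))
        have t3 := dist_triangle_right (α s) (α t₀) (σ (t - t₀))
        have hd : 0 ≤ dist (α s) (σ (t - t₀)) := dist_nonneg
        constructor <;> nlinarith
      · push Not at hs'
        simp only [not_le.2 hst₀, not_le.2 hs', if_false]
        rw [hσ (s - t₀) ⟨by linarith, by linarith [hs.2]⟩ (t - t₀)
          ⟨by linarith, by linarith [ht.2]⟩, abs_sub_comm, abs_of_nonneg (by linarith)]
        constructor <;> nlinarith
  intro s hs t ht
  rcases le_total s t with h | h
  · rw [abs_sub_comm, abs_of_nonneg (by linarith)]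
    exact key s hs t ht h
  · rw [abs_of_nonneg (by linarith), dist_comm]
    exact key t ht s hs h

/-- A nonempty family of points has an almost nearest point to `z`. -/
theorem exists_almost_nearest {a : ℝ} (ha : 0 ≤ a) (α : ℝ → X) (z : X) :
    ∃ t₀ ∈ Icc 0 a, ∀ t ∈ Icc 0 a, dist (α t₀) z ≤ dist (α t) z + 1 := by
  have hne : ((fun t => dist (α t) z) '' Icc 0 a).Nonempty := ⟨_, 0, ⟨le_rfl, ha⟩, rfl⟩
  have hbdd : BddBelow ((fun t => dist (α t) z) '' Icc 0 a) := by
    refine ⟨0, ?_⟩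
    rintro _ ⟨t, -, rfl⟩
    exact dist_nonneg
  obtain ⟨_, ⟨t₀, ht₀, rfl⟩, h⟩ := exists_lt_of_csInf_lt hne (lt_add_one _)
  refine ⟨t₀, ht₀, fun t ht => h.le.trans ?_⟩
  gcongr
  exact csInf_le hbdd ⟨t, ht, rfl⟩

/-- A chain of `M + 1` points with steps at most `δ` can be replaced by a quasi-geodesic with the
same ends near the chain, with a constant depending only on `M` (not on `δ`). -/
theorem exists_qg_of_chain (hX : IsGeodesicSpace X) (M : ℕ) :
    ∃ C : ℝ, 1 ≤ C ∧ ∀ (δ : ℝ) (q : ℕ → X), 0 ≤ δ →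
      (∀ i < M, dist (q i) (q (i + 1)) ≤ δ) →
      ∃ (a : ℝ) (α : ℝ → X), 0 ≤ a ∧ IsQG dist C (Icc 0 a) α ∧ α 0 = q 0 ∧ α a = q M ∧
        ∀ t ∈ Icc 0 a, ∃ i ≤ M, dist (α t) (q i) ≤ δ + 1 := by
  induction M with
  | zero =>
    refine ⟨1, le_rfl, fun δ q hδ _ => ⟨0, fun _ => q 0, le_rfl, ⟨le_rfl, ?_⟩, rfl, rfl, ?_⟩⟩
    · intro s hs t ht
      rw [Icc_self, mem_singleton_iff] at hs ht
      subst hs ht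
      simp
    · intro t _
      exact ⟨0, le_rfl, by rw [dist_self]; linarith⟩
  | succ M ih =>
    obtain ⟨C, hC, ih⟩ := ih
    refine ⟨2 * C + 1, by linarith, fun δ q hδ hq => ?_⟩
    obtain ⟨a, α, ha, hα, hα0, hαa, hnear⟩ := ih δ q hδ (fun i hi => hq i (by omega))
    obtain ⟨t₀, ht₀, hmin⟩ := exists_almost_nearest ha α (q (M + 1))
    obtain ⟨σ, hσ0, hσ1, hσ⟩ := hX (α t₀) (q (M + 1))
    have hD0 : 0 ≤ dist (α t₀) (q (M + 1)) := dist_nonneg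
    have hDδ : dist (α t₀) (q (M + 1)) ≤ δ + 1 := by
      have h1 := hmin a ⟨ha, le_rfl⟩
      rw [hαa] at h1
      linarith [hq M (by omega)]
    refine ⟨_, _, by linarith [ht₀.1], qg_extend hα ht₀ hmin hσ0 hσ1 hσ, ?_, ?_, ?_⟩
    · simp only [ht₀.1, if_true, hα0]
    · by_cases h : t₀ + dist (α t₀) (q (M + 1)) ≤ t₀
      · have h0 : dist (α t₀) (q (M + 1)) = 0 := by linarith
        simp only [h0, add_zero, le_refl, if_true]
        exact dist_eq_zero.1 h0
      · simp only [h, if_false, add_sub_cancel_left, hσ1]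
    · intro t ht
      by_cases h : t ≤ t₀
      · simp only [h, if_true]
        obtain ⟨i, hi, hd⟩ := hnear t ⟨ht.1, h.trans ht₀.2⟩
        exact ⟨i, by omega, hd⟩
      · simp only [h, if_false]
        push Not at h
        refine ⟨M + 1, le_rfl, ?_⟩
        have hz : dist (σ (t - t₀)) (q (M + 1)) = dist (α t₀) (q (M + 1)) - (t - t₀) := by
          conv_lhs => rw [← hσ1]
          rw [hσ (t - t₀) ⟨by linarith, by linarith [ht.2]⟩ _ ⟨hD0, le_rfl⟩,
            abs_sub_comm, abs_of_nonneg (by linarith [ht.2])]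
        linarith

/-- A path of length less than `M δ` can be sampled by a chain of `M + 1` points with steps at most
`δ`: each step goes to a point at distance exactly `δ`, or to the end of the path. -/
theorem exists_chain {c : ℝ → X} (hc : ContinuousOn c (Icc 0 1)) {δ : ℝ} (hδ : 0 < δ) (M : ℕ)
    (hM : eVariationOn c (Icc 0 1) < ENNReal.ofReal (M * δ)) :
    ∃ t : ℕ → ℝ, (∀ i, t i ∈ Icc (0 : ℝ) 1) ∧ t 0 = 0 ∧ t M = 1 ∧
      ∀ i, dist (c (t i)) (c (t (i + 1))) ≤ δ := by
  have step : ∀ t : Icc (0 : ℝ) 1, ∃ u : Icc (0 : ℝ) 1, t ≤ u ∧ dist (c t) (c u) ≤ δ ∧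
      ((u : ℝ) = 1 ∨ dist (c t) (c u) = δ) := by
    rintro ⟨t, ht⟩
    by_cases h : dist (c t) (c 1) ≤ δ
    · exact ⟨⟨1, by simp⟩, ht.2, h, Or.inl rfl⟩
    · push Not at h
      have hcont : ContinuousOn (fun u => dist (c t) (c u)) (Icc t 1) :=
        (continuous_const.dist continuous_id).comp_continuousOn (hc.mono (Icc_subset_Icc_left ht.1))
      obtain ⟨u, hu, hdu⟩ := intermediate_value_Icc ht.2 hcont
        (show δ ∈ Icc (dist (c t) (c t)) (dist (c t) (c 1)) from
          ⟨by rw [dist_self]; exact hδ.le, h.le⟩)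
      exact ⟨⟨u, ht.1.trans hu.1, hu.2⟩, hu.1, hdu.le, Or.inr hdu⟩
  choose nxt hle hdist halt using step
  let t : ℕ → Icc (0 : ℝ) 1 := fun n => nxt^[n] ⟨0, by simp⟩
  have ht : ∀ n, t (n + 1) = nxt (t n) := fun n => Function.iterate_succ_apply' _ _ _
  have hmono : Monotone fun n => (t n : ℝ) :=
    monotone_nat_of_le_succ fun n => by rw [ht]; exact hle _
  refine ⟨fun n => t n, fun n => (t n).2, rfl, ?_, fun i => by simp only [ht]; exact hdist _⟩
  by_contra hne
  have hexact : ∀ i < M, dist (c (t i)) (c (t (i + 1))) = δ := by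
    intro i hi
    rw [ht]
    refine (halt (t i)).resolve_left fun h1 => hne (le_antisymm (t M).2.2 ?_)
    have hiM := hmono (by omega : i + 1 ≤ M)
    simp only [ht, h1] at hiM
    exact hiM
  have hsum := eVariationOn.sum_le (f := c) (n := M) hmono (fun i => (t i).2)
  have heq : ∑ i ∈ Finset.range M, edist (c (t (i + 1))) (c (t i)) = ENNReal.ofReal (M * δ) := by
    rw [Finset.sum_congr rfl (g := fun _ => ENNReal.ofReal δ)]
    · rw [Finset.sum_const, Finset.card_range, nsmul_eq_mul,
        ENNReal.ofReal_mul (Nat.cast_nonneg M), ENNReal.ofReal_natCast]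
    · intro i hi
      rw [edist_comm, edist_dist, hexact i (Finset.mem_range.1 hi)]
  rw [heq] at hsum
  exact absurd hM (not_lt.2 hsum)

/-- A quasi-geodesic `α` whose ends lie on `γ` on either side of `γ s`, and which stays
`n`-close to `γ`, passes within a bounded distance of `γ s`: at some point the nearby parameter on
`γ` changes from `≤ s` to `≥ s` while `α` moves a bounded distance. -/
theorem qg_passes_near {L C n a s : ℝ} {γ α : ℝ → X} (hγ : IsQG dist L (Ici 0) γ)
    (hα : IsQG dist C (Icc 0 a) α) (ha : 0 ≤ a) (hs : 0 ≤ s)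
    (hnear : ∀ t ∈ Icc 0 a, InNbhd dist (γ '' Ici 0) n (α t))
    (h0 : ∃ τ ∈ Icc 0 s, α 0 = γ τ) (h1 : ∃ τ ∈ Ici s, α a = γ τ) :
    ∃ t ∈ Icc 0 a, dist (α t) (γ s) ≤ n + (L * (L * (2 * n + 2 * C + L)) + L) := by
  have hn : 0 ≤ n := by
    obtain ⟨x, -, hx⟩ := hnear 0 ⟨le_rfl, ha⟩
    exact dist_nonneg.trans hx
  let S : Set ℝ := {t | t ∈ Icc 0 a ∧ ∃ τ ∈ Icc 0 s, dist (α t) (γ τ) ≤ n}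
  have hS0 : (0 : ℝ) ∈ S := by
    obtain ⟨τ, hτ, h⟩ := h0
    exact ⟨⟨le_rfl, ha⟩, τ, hτ, by rw [h, dist_self]; exact hn⟩
  have hbdd : BddAbove S := ⟨a, fun t ht => ht.1.2⟩
  obtain ⟨t, ⟨ht, τ₁, hτ₁, hd₁⟩, hlt⟩ := exists_lt_of_lt_csSup ⟨0, hS0⟩ (sub_one_lt (sSup S))
  -- The next parameter `min (t + 1) a` is either the end of `α` or beyond `S`.
  have hu : min (t + 1) a ∈ Icc 0 a := ⟨le_min (by linarith [ht.1]) ha, min_le_right _ _⟩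
  have hτ₂ : ∃ τ ∈ Ici s, dist (α (min (t + 1) a)) (γ τ) ≤ n := by
    rcases le_total a (t + 1) with h | h
    · rw [min_eq_right h]
      obtain ⟨τ, hτ, h⟩ := h1
      exact ⟨τ, hτ, by rw [h, dist_self]; exact hn⟩
    · rw [min_eq_left h] at hu ⊢
      obtain ⟨_, ⟨τ, hτ, rfl⟩, hd⟩ := hnear _ hu
      refine ⟨τ, ?_, hd⟩
      by_contra hcon
      have hle := le_csSup hbdd (show t + 1 ∈ S from ⟨hu, τ, ⟨hτ, (not_le.1 hcon).le⟩, hd⟩)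
      linarith
  obtain ⟨τ₂, hτ₂, hd₂⟩ := hτ₂
  rw [mem_Ici] at hτ₂
  obtain ⟨hL, hγ⟩ := hγ
  obtain ⟨hC, hα⟩ := hα
  have hstep : dist (α t) (α (min (t + 1) a)) ≤ 2 * C := by
    refine (hα t ht _ hu).2.trans ?_
    have : |t - min (t + 1) a| ≤ 1 := by
      rw [abs_le]
      constructor
      · linarith [min_le_left (t + 1) a]
      · linarith [le_min (by linarith : t ≤ t + 1) ht.2]
    nlinarith
  have hdγ : dist (γ τ₁) (γ τ₂) ≤ 2 * n + 2 * C := by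
    have t1 := dist_triangle4 (γ τ₁) (α t) (α (min (t + 1) a)) (γ τ₂)
    rw [dist_comm (γ τ₁) (α t)] at t1
    linarith
  have hl := (hγ τ₁ hτ₁.1 τ₂ (hs.trans hτ₂)).1
  rw [abs_sub_comm, abs_of_nonneg (by linarith [hτ₁.2]), sub_le_iff_le_add,
    div_le_iff₀ (by linarith)] at hl
  have hgap : s - τ₁ ≤ L * (2 * n + 2 * C + L) := by nlinarith
  have hγs := (hγ τ₁ hτ₁.1 s hs).2
  rw [abs_sub_comm, abs_of_nonneg (by linarith [hτ₁.2])] at hγs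
  refine ⟨t, ht, (dist_triangle _ (γ τ₁) _).trans ?_⟩
  have := mul_le_mul_of_nonneg_left hgap (by linarith : (0 : ℝ) ≤ L)
  linarith

/-- For each slope `K`, the bound `K r ≤ δ_γ(r, ε)` holds for all `r` beyond a threshold that is
uniform over all `N`-Morse `L`-quasi-geodesic rays. -/
theorem eventually_le_divergence (hX : IsGeodesicSpace X) (L ε : ℝ) (hε : 0 < ε) (N : ℝ → ℝ)
    (K : ℕ) :
    ∃ R : ℝ, ∀ r, R ≤ r → ∀ γ : ℝ → X, IsQG dist L (Ici 0) γ →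
      MorseSet dist N (γ '' Ici 0) → ENNReal.ofReal (r * K) ≤ divergence γ r ε := by
  obtain ⟨M, hM⟩ := exists_nat_ge (2 * K / ε)
  obtain ⟨C, hC, hchain⟩ := exists_qg_of_chain hX M
  let B : ℝ := N C + (L * (L * (2 * N C + 2 * C + L)) + L)
  refine ⟨max 1 (2 * (B + 1) / ε), fun r hr γ hγ hN => ?_⟩
  have hr1 : 1 ≤ r := (le_max_left _ _).trans hr
  have hrB : B + 1 ≤ ε * r / 2 := by
    have h := (le_max_right _ _).trans hr
    rw [div_le_iff₀ hε] at h
    linarith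
  by_contra hlt
  rw [not_le] at hlt
  unfold divergence at hlt
  simp only [iInf_lt_iff] at hlt
  obtain ⟨s, hs, c, hc, hc0, hc1, havoid, hlen⟩ := hlt
  have hδ : 0 < ε * r / 2 := by positivity
  have hlen' : eVariationOn c (Icc 0 1) < ENNReal.ofReal (M * (ε * r / 2)) := by
    refine hlen.trans_le (ENNReal.ofReal_le_ofReal ?_)
    rw [div_le_iff₀ hε] at hM
    nlinarith
  obtain ⟨t, ht, ht0, htM, hstep⟩ := exists_chain hc hδ M hlen'
  obtain ⟨a, α, ha, hα, hα0, hαa, hclose⟩ :=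
    hchain _ (fun i => c (t i)) hδ.le (fun i _ => hstep i)
  simp only [ht0, hc0] at hα0
  simp only [htM, hc1] at hαa
  have hnear := hN C hC 0 a ha α hα (hα0 ▸ mem_image_of_mem γ (mem_Ici.2 (by linarith)))
    (hαa ▸ mem_image_of_mem γ (mem_Ici.2 (by linarith)))
  obtain ⟨u, hu, hdu⟩ := qg_passes_near (s := s) hγ hα ha (by linarith) hnear
    ⟨s - r, ⟨by linarith, by linarith⟩, hα0⟩ ⟨s + r, mem_Ici.2 (by linarith), hαa⟩
  obtain ⟨i, -, hi⟩ := hclose u hu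
  have hav := havoid (t i) (ht i)
  have htri := dist_triangle_left (c (t i)) (γ s) (α u)
  change _ ≤ B at hdu
  linarith

/-- A family of properties `P K`, each holding from some point on, holds along a monotone function
tending to infinity. -/
theorem exists_diagonal {P : ℕ → ℝ → Prop} (h0 : ∀ r, P 0 r)
    (hP : ∀ K, ∃ R, ∀ r, R ≤ r → P K r) :
    ∃ g : ℝ → ℕ, Monotone g ∧ Tendsto g atTop atTop ∧ ∀ r, P (g r) r := by
  classical
  let g : ℝ → ℕ := fun r => Nat.findGreatest (fun K => ∀ r', r ≤ r' → P K r') ⌊r⌋₊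
  have hg : ∀ r, ∀ r', r ≤ r' → P (g r) r' := fun r =>
    Nat.findGreatest_spec (P := fun K => ∀ r', r ≤ r' → P K r') (Nat.zero_le _) fun r' _ => h0 r'
  refine ⟨g, fun r r' hrr => ?_, tendsto_atTop.2 fun K => ?_, fun r => hg r r le_rfl⟩
  · exact Nat.le_findGreatest ((Nat.findGreatest_le _).trans (Nat.floor_le_floor hrr))
      fun r'' hr'' => hg r r'' (hrr.trans hr'')
  · obtain ⟨R, hR⟩ := hP K
    filter_upwards [eventually_ge_atTop R, eventually_ge_atTop (K : ℝ)] with r h1 h2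
    exact Nat.le_findGreatest (Nat.le_floor h2) fun r' hr' => hR r' (h1.trans hr')

end Divergence

/-- **Corollary 2.5** (Statement 5).  In a proper geodesic metric space, given `L ≥ 1`,
`0 < ε < 1/(4L)` and a Morse gauge `N`, there is a weakly increasing diverging function
`f` such that every `N`-Morse `L`-quasi-geodesic ray `γ` satisfies
`δ_γ(r, ε) ≥ r · f(r)` for all `r ≥ 0`. -/
theorem morse_implies_uniform_divergence
    {X : Type*} [MetricSpace X] [ProperSpace X] (hX : IsGeodesicSpace X)
    (L ε : ℝ) (hL : 1 ≤ L) (hε : 0 < ε) (hε' : ε < 1 / (4 * L)) (N : ℝ → ℝ) :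
    ∃ f : ℝ → ℝ, Monotone f ∧ (∀ r, 0 ≤ f r) ∧ Tendsto f atTop atTop ∧
      ∀ γ : ℝ → X, IsQG dist L (Set.Ici 0) γ → MorseSet dist N (γ '' Set.Ici 0) →
        ∀ r : ℝ, 0 ≤ r → ENNReal.ofReal (r * f r) ≤ divergence γ r ε := by
  obtain ⟨g, hmono, hlim, hg⟩ := exists_diagonal
    (P := fun K r => ∀ γ : ℝ → X, IsQG dist L (Set.Ici 0) γ → MorseSet dist N (γ '' Set.Ici 0) →
      ENNReal.ofReal (r * K) ≤ divergence γ r ε)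
    (fun r γ _ _ => by simp) (eventually_le_divergence hX L ε hε N)
  exact ⟨fun r => g r, fun r r' h => Nat.cast_le.2 (hmono h), fun r => Nat.cast_nonneg _,
    tendsto_natCast_atTop_atTop.comp hlim, fun γ hγ hN r _ => hg r γ hγ hN⟩

end MorseGoG
end

section
/- Let X and Y be proper geodesic metric spaces and let α ⊆ X and β ⊆ Y be L-quasi-geodesic rays. Suppose that there exist constants K ≥ 0 and 0 < ε₁, ε₂ ≤ 1/(16L) such that δ_α(r, ε₁) ≤ K·δ_β(r, ε₂) for all r > K. If α is N-Morse in X, then β is N'-Morse in Y, where the Morse gauge N' depends only on N, L, K and ε₁. -/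
/-!
The proof compares both Morse properties with superlinear divergence, keeping all constants uniform.

*Morse implies superlinear divergence* (`le_divergence_of_morse`). Suppose a path of length at most
`M r` joins `α (s - r)` to `α (s + r)` outside the ball `B(α s, ε r)`. Make travel inside this ball
more expensive by a large constant factor `Λ`, depending on `M` and `ε` only. The modified distance
is bi-Lipschitz to the original one, so a cheapest chain of unit steps between the two points is a
quasi-geodesic with constant `Λ + 1` (`exists_qg_of_reach`). It costs at most about `M r`, hence
cannot come `ε r / 2`-close to `α s`. By the Morse property it stays `N (Λ + 1)`-close to `α`, and
so it must pass at bounded distance from `α s`. This bounds `r`.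

*Superlinear divergence implies Morse* (`exists_gauge_of_divergence`). Let `q` be a
`C`-quasi-geodesic from `β a'` to `β b'`, and let `β s` be a point of `β [a', b']` nearly as far as
possible from `q`, at distance about `D`. Running along `β` away from `s`, across to `q`, along `q`
and back gives a detour around `β s` of length linear in `D`, at a scale comparable to `D`
(`exists_detour`). Superlinear divergence bounds `D`, and then `q` is close to `β` because `q`
cannot jump (`near_of_near`). Only the bound `ε ≤ 1 / (16 L)` enters, so the gauge does not depend
on `ε₂`.

The hypothesis on the divergence functions carries superlinearity from `α` to `β`.
-/

open Set Filter Topology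
open scoped ENNReal

namespace MorseGoG

universe u v

/-! ### Weighted chains -/

/-- `Reach w x y k`: there is a chain from `x` to `y` with steps of length at most `1` and of total
cost `k`, where leaving a point `p` costs `w p`. -/
inductive Reach {X : Type*} [MetricSpace X] (w : X → ℕ) : X → X → ℕ → Prop
  | refl (x : X) : Reach w x x 0
  | step {x y z : X} {k : ℕ} : dist x y ≤ 1 → Reach w y z k → Reach w x z (w x + k)

theorem Reach.trans {X : Type*} [MetricSpace X] {w : X → ℕ} {x y z : X} {k l : ℕ}
    (h : Reach w x y k) (h' : Reach w y z l) : Reach w x z (k + l) := by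
  induction h with
  | refl x => simpa using h'
  | step hd _ ih => rw [add_assoc]; exact Reach.step hd (ih h')

/-- A chain unfolded as a sequence of points together with its accumulated cost `T`. -/
theorem Reach.exists_seq {X : Type*} [MetricSpace X] {w : X → ℕ} (hw : ∀ x, 1 ≤ w x)
    {x y : X} {k : ℕ} (h : Reach w x y k) :
    ∃ (m : ℕ) (p : ℕ → X) (T : ℕ → ℕ), p 0 = x ∧ p m = y ∧ T 0 = 0 ∧ T m = k ∧
      (∀ i, dist (p i) (p (i + 1)) ≤ 1) ∧
      (∀ i j, i ≤ j → j ≤ m →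
        j - i ≤ T j - T i ∧ T i ≤ T j ∧ Reach w (p i) (p j) (T j - T i)) := by
  induction h with
  | refl x =>
    refine ⟨0, fun _ => x, fun _ => 0, rfl, rfl, rfl, rfl, fun i => by simp, ?_⟩
    intro i j hij hj
    obtain rfl : j = 0 := by omega
    obtain rfl : i = 0 := by omega
    exact ⟨by simp, by simp, Reach.refl x⟩
  | @step x y z k hd _ ih =>
    obtain ⟨m, p, T, hp0, hpm, hT0, hTm, hst, hR⟩ := ih
    refine ⟨m + 1, fun i => Nat.casesOn i x p, fun i => Nat.casesOn i 0 (fun i => w x + T i),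
      rfl, hpm, rfl, by simp [hTm], ?_, ?_⟩
    · intro i
      cases i with
      | zero => simpa [hp0] using hd
      | succ i => exact hst i
    · intro i j hij hj
      cases j with
      | zero =>
        obtain rfl : i = 0 := by omega
        exact ⟨by simp, by simp, Reach.refl x⟩
      | succ j =>
        cases i with
        | zero =>
          obtain ⟨h1, h2, h3⟩ := hR 0 j (Nat.zero_le _) (by omega)
          have := hw x
          refine ⟨?_, Nat.zero_le _, ?_⟩
          · change j + 1 - 0 ≤ w x + T j - 0
            omega
          have h4 : Reach w x (p j) (w x + (T j - T 0)) :=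
            Reach.step (y := p 0) (by rw [hp0]; exact hd) h3
          simpa [hT0] using h4
        | succ i =>
          obtain ⟨h1, h2, h3⟩ := hR i j (by omega) (by omega)
          refine ⟨by dsimp only; omega, by dsimp only; omega, ?_⟩
          have h4 : w x + T j - (w x + T i) = T j - T i := by omega
          dsimp only
          rw [h4]
          exact h3

/-- In a geodesic space the weighted cost is at most the maximal weight times the distance
(rounded up). -/
theorem reach_of_dist_le {X : Type*} [MetricSpace X] (hX : IsGeodesicSpace X) {w : X → ℕ} {Λ : ℕ}
    (hw : ∀ x, w x ≤ Λ) (n : ℕ) : ∀ x y : X, dist x y ≤ n → ∃ k, k ≤ Λ * n ∧ Reach w x y k := by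
  induction n with
  | zero =>
    intro x y h
    have : x = y := dist_le_zero.1 (by simpa using h)
    subst this
    exact ⟨0, by simp, Reach.refl x⟩
  | succ n ih =>
    intro x y h
    obtain ⟨g, g0, g1, hg⟩ := hX x y
    have hd : 0 ≤ dist x y := dist_nonneg
    have hmem : min 1 (dist x y) ∈ Icc 0 (dist x y) :=
      ⟨le_min zero_le_one hd, min_le_right _ _⟩
    have h1 : dist x (g (min 1 (dist x y))) ≤ 1 := by
      have := hg 0 ⟨le_rfl, hd⟩ _ hmem
      rw [g0] at this
      rw [this, zero_sub, abs_neg, abs_of_nonneg hmem.1]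
      exact min_le_left _ _
    have h2 : dist (g (min 1 (dist x y))) y ≤ n := by
      have := hg _ hmem (dist x y) ⟨hd, le_rfl⟩
      rw [g1] at this
      rw [this, abs_sub_comm, abs_of_nonneg (by linarith [hmem.2])]
      push_cast at h
      rcases min_cases (1 : ℝ) (dist x y) with ⟨h3, _⟩ | ⟨h3, _⟩
      · rw [h3]; linarith
      · rw [h3]; simp
    obtain ⟨k, hk, hR⟩ := ih _ _ h2
    exact ⟨w x + k, by have := hw x; rw [Nat.mul_succ]; omega, Reach.step h1 hR⟩

/-- A continuous path of length at most `n` through points of weight `1` is shadowed by a chain of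
cost at most `n + 1`: stop each time the path has moved by distance `1`. -/
theorem reach_of_path {X : Type*} [MetricSpace X] {w : X → ℕ} {c : ℝ → X} {b : ℝ} (n : ℕ) :
    ∀ a : ℝ, a ≤ b → ContinuousOn c (Icc a b) → (∀ t ∈ Icc a b, w (c t) = 1) →
      eVariationOn c (Icc a b) ≤ n → ∃ k, k ≤ n + 1 ∧ Reach w (c a) (c b) k := by
  induction n with
  | zero =>
    intro a hab _ hw hv
    have h1 : edist (c a) (c b) ≤ 0 :=
      (eVariationOn.edist_le c (left_mem_Icc.2 hab) (right_mem_Icc.2 hab)).trans (by simpa using hv)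
    have h2 : c a = c b := edist_le_zero.1 h1
    rw [h2]
    exact ⟨0, by omega, Reach.refl _⟩
  | succ n ih =>
    intro a hab hc hw hv
    by_cases hd : dist (c a) (c b) ≤ 1
    · refine ⟨1, by omega, ?_⟩
      have := Reach.step (w := w) hd (Reach.refl (c b))
      rwa [hw a (left_mem_Icc.2 hab)] at this
    · push Not at hd
      obtain ⟨t, ht, h1⟩ : ∃ t ∈ Icc a b, dist (c a) (c t) = 1 := by
        have hcont : ContinuousOn (fun t => dist (c a) (c t)) (Icc a b) :=
          continuous_dist.comp_continuousOn (continuousOn_const.prodMk hc)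
        exact intermediate_value_Icc hab hcont ⟨by simp, hd.le⟩
      have hadd := eVariationOn.Icc_add_Icc c (s := univ) ht.1 ht.2 (mem_univ _)
      simp only [univ_inter] at hadd
      have hge : (1 : ℝ≥0∞) ≤ eVariationOn c (Icc a t) := by
        have := eVariationOn.edist_le c (left_mem_Icc.2 ht.1) (right_mem_Icc.2 ht.1)
        rwa [edist_dist, h1, ENNReal.ofReal_one] at this
      have hv' : eVariationOn c (Icc t b) ≤ n := by
        rw [← hadd] at hv
        have h3 : 1 + eVariationOn c (Icc t b) ≤ 1 + n := by
          refine (add_le_add_left hge _).trans (hv.trans (le_of_eq ?_))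
          push_cast; rw [add_comm]
        exact (ENNReal.add_le_add_iff_left ENNReal.one_ne_top).1 h3
      obtain ⟨k, hk, hR⟩ := ih t ht.2 (hc.mono (Icc_subset_Icc_left ht.1))
        (fun u hu => hw u (Icc_subset_Icc_left ht.1 hu)) hv'
      refine ⟨1 + k, by omega, ?_⟩
      have := Reach.step (w := w) h1.le hR
      rwa [hw a (left_mem_Icc.2 hab)] at this

/-- Two points joined by a chain of cost `k` are joined by one of minimal cost, which is a
quasi-geodesic with constant controlled by the maximal weight; its initial parts cost at most
`k`. -/
theorem exists_qg_of_reach {X : Type*} [MetricSpace X] (hX : IsGeodesicSpace X) {w : X → ℕ} {Λ : ℕ}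
    (hw1 : ∀ x, 1 ≤ w x) (hw : ∀ x, w x ≤ Λ) {x y : X} {k : ℕ} (h : Reach w x y k) :
    ∃ (m : ℕ) (p : ℕ → X), p 0 = x ∧ p m = y ∧ (∀ i, dist (p i) (p (i + 1)) ≤ 1) ∧
      (∀ i ≤ m, ∃ l ≤ k, Reach w x (p i) l) ∧
      IsQG dist ((Λ : ℝ) + 1) (Icc 0 (m : ℝ)) (fun t => p ⌊t⌋₊) := by
  classical
  have hex : ∃ k, Reach w x y k := ⟨k, h⟩
  have hmin : ∀ l, Reach w x y l → Nat.find hex ≤ l := fun l hl => Nat.find_min' hex hl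
  obtain ⟨m, p, T, hp0, hpm, hT0, hTm, hst, hR⟩ := (Nat.find_spec hex).exists_seq hw1
  have hfk : Nat.find hex ≤ k := hmin k h
  -- Replacing the part of the chain between `i` and `j` by a geodesic cannot lower the cost.
  have key : ∀ i j : ℕ, i ≤ j → j ≤ m → dist (p i) (p j) ≤ (j : ℝ) - i ∧
      (j : ℝ) - i ≤ Λ * (dist (p i) (p j) + 1) := by
    intro i j hij hj
    constructor
    · have := dist_le_Ico_sum_dist p hij
      refine this.trans ((Finset.sum_le_sum fun k _ => hst k).trans ?_)
      simp [Nat.cast_sub hij]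
    · obtain ⟨l, hl, hl'⟩ := reach_of_dist_le hX hw ⌈dist (p i) (p j)⌉₊ (p i) (p j) (Nat.le_ceil _)
      obtain ⟨h1, h2, -⟩ := hR i j hij hj
      obtain ⟨-, h3, h4⟩ := hR 0 i (Nat.zero_le _) (by omega)
      obtain ⟨-, h5, h6⟩ := hR j m hj le_rfl
      rw [hp0] at h4
      rw [hpm] at h6
      have h7 := hmin _ ((h4.trans hl').trans h6)
      have h8 : j - i ≤ Λ * ⌈dist (p i) (p j)⌉₊ := by omega
      have h9 : ((j - i : ℕ) : ℝ) ≤ Λ * (⌈dist (p i) (p j)⌉₊ : ℝ) := by exact_mod_cast h8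
      rw [Nat.cast_sub hij] at h9
      refine h9.trans ?_
      gcongr
      exact (Nat.ceil_lt_add_one dist_nonneg).le
  refine ⟨m, p, hp0, hpm, hst, ?_, ?_⟩
  · intro i hi
    obtain ⟨-, h1, h2⟩ := hR 0 i (Nat.zero_le _) hi
    obtain ⟨-, h3, -⟩ := hR i m hi le_rfl
    rw [hp0] at h2
    exact ⟨_, by omega, h2⟩
  · have hΛ : (0 : ℝ) ≤ Λ := Nat.cast_nonneg _
    refine ⟨by linarith, ?_⟩
    have main : ∀ s ∈ Icc (0 : ℝ) m, ∀ t ∈ Icc (0 : ℝ) m, s ≤ t →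
        (t - s) / ((Λ : ℝ) + 1) - (Λ + 1) ≤ dist (p ⌊s⌋₊) (p ⌊t⌋₊) ∧
        dist (p ⌊s⌋₊) (p ⌊t⌋₊) ≤ ((Λ : ℝ) + 1) * (t - s) + (Λ + 1) := by
      intro s hs t ht hst'
      have hfl : ⌊t⌋₊ ≤ m := by
        have := Nat.floor_le_floor ht.2
        simpa using this
      obtain ⟨h1, h2⟩ := key ⌊s⌋₊ ⌊t⌋₊ (Nat.floor_le_floor hst') hfl
      have a1 := Nat.floor_le hs.1
      have a2 := Nat.lt_floor_add_one s
      have b1 := Nat.floor_le ht.1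
      have b2 := Nat.lt_floor_add_one t
      have hd : 0 ≤ dist (p ⌊s⌋₊) (p ⌊t⌋₊) := dist_nonneg
      constructor
      · rw [sub_le_iff_le_add, div_le_iff₀ (by linarith)]
        nlinarith [mul_nonneg hΛ hΛ, mul_nonneg hΛ hd]
      · nlinarith [mul_nonneg hΛ (sub_nonneg.2 hst')]
    intro s hs t ht
    rcases le_total s t with hst' | hst'
    · rw [abs_sub_comm, abs_of_nonneg (sub_nonneg.2 hst')]
      exact main s hs t ht hst'
    · rw [abs_of_nonneg (sub_nonneg.2 hst'), dist_comm]
      exact main t ht s hs hst'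

/-! ### Morse rays have superlinear divergence -/

/-- The parameters of two points of a quasi-geodesic are close if the points are. -/
theorem IsQG.abs_le {X : Type*} [MetricSpace X] {C : ℝ} {I : Set ℝ} {γ : ℝ → X}
    (h : IsQG dist C I γ) {s t A : ℝ} (hs : s ∈ I) (ht : t ∈ I) (hd : dist (γ s) (γ t) ≤ A) :
    |s - t| ≤ C * (A + C) := by
  have h0 : 0 < C := by linarith [h.1]
  have h1 := (h.2 s hs t ht).1
  rw [sub_le_iff_le_add, div_le_iff₀ h0] at h1
  nlinarith

/-- Superlinear divergence of Morse rays, with uniform constants: the inverse growth rate `R`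
depends only on the gauge `N`, on `L`, `ε` and the slope `M`. -/
theorem le_divergence_of_morse (N : ℝ → ℝ) (L ε M : ℝ) (hL : 1 ≤ L) (hε : 0 < ε) (hM : 0 ≤ M) :
    ∃ R : ℝ, ∀ (X : Type u) [MetricSpace X], IsGeodesicSpace X → ∀ α : ℝ → X,
      IsQG dist L (Ici 0) α → MorseSet dist N (α '' Ici 0) →
      ∀ r : ℝ, R ≤ r → ENNReal.ofReal (M * r) ≤ divergence α r ε := by
  classical
  -- Inside the ball, moving is so expensive that reaching its centre costs more than the path.
  set Λ : ℕ := ⌈4 * (M + 2) / ε⌉₊ + 1 with hΛdef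
  have hΛ : 4 * (M + 2) ≤ Λ * ε := by
    have := Nat.le_ceil (4 * (M + 2) / ε)
    rw [div_le_iff₀ hε] at this
    rw [hΛdef]; push_cast; linarith
  have hΛ1 : 1 ≤ Λ := by omega
  set P : ℝ := max (N ((Λ : ℝ) + 1)) 0 with hP
  have hP0 : 0 ≤ P := le_max_right _ _
  set Q : ℝ := P + (L * (L * (2 * P + 1 + L)) + L) with hQ
  refine ⟨2 + 4 / ε + 2 * Q / ε + L * (P + L) + 1, ?_⟩
  intro X _ hX α hα hMo r hr
  have hQ0 : 0 ≤ Q := by positivity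
  have e1 : 0 ≤ 4 / ε := by positivity
  have e2 : 0 ≤ 2 * Q / ε := by positivity
  have e3 : 0 ≤ L * (P + L) := by positivity
  have hr2 : 2 ≤ r := by linarith
  have hr4 : 4 ≤ r * ε := by rw [← div_le_iff₀ hε]; linarith
  have hrQ : 2 * Q ≤ r * ε := by rw [← div_le_iff₀ hε]; linarith
  have hrL : L * (P + L) < r := by linarith
  unfold divergence
  refine le_iInf fun s => le_iInf fun hs => le_iInf fun c => le_iInf fun hc => le_iInf fun hc0 =>
    le_iInf fun hc1 => le_iInf fun hav => ?_
  by_contra hlt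
  push Not at hlt
  set z : X := α s with hz
  set w : X → ℕ := fun y => if dist y z ≤ ε * r then Λ else 1 with hw
  have hw1 : ∀ x, 1 ≤ w x := fun x => by simp only [hw]; split_ifs <;> omega
  have hwΛ : ∀ x, w x ≤ Λ := fun x => by simp only [hw]; split_ifs <;> omega
  have hMr : 0 ≤ M * r := by positivity
  have hvar : eVariationOn c (Icc 0 1) ≤ (⌈M * r⌉₊ : ℕ) := by
    refine hlt.le.trans ?_
    rw [← ENNReal.ofReal_natCast]
    exact ENNReal.ofReal_le_ofReal (Nat.le_ceil _)
  obtain ⟨k, hk, hRk⟩ := reach_of_path (w := w) ⌈M * r⌉₊ 0 zero_le_one hc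
    (fun t ht => by simp [hw, hav t ht]) hvar
  have hkr : (k : ℝ) ≤ M * r + 2 := by
    have h1 : (k : ℝ) ≤ (⌈M * r⌉₊ : ℝ) + 1 := by exact_mod_cast hk
    linarith [Nat.ceil_lt_add_one hMr]
  obtain ⟨m, p, hp0, hpm, hst, hpre, hqg⟩ := exists_qg_of_reach hX hw1 hwΛ hRk
  -- The function `Λ · max 0 (ε r - 1 - d(·, z))` grows by at most the cost along chains.
  have hpot : ∀ x y l, Reach w x y l → (Λ : ℝ) * max 0 (ε * r - 1 - dist y z) ≤
      Λ * max 0 (ε * r - 1 - dist x z) + l := by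
    intro x y l h
    induction h with
    | refl x => simp
    | @step x y z' l hd _ ih =>
      have htri : dist x z ≤ dist x y + dist y z := dist_triangle _ _ _
      refine ih.trans ?_
      push_cast
      have hΛ0 : (0 : ℝ) ≤ Λ := Nat.cast_nonneg _
      by_cases hx : dist x z ≤ ε * r
      · have hwx : w x = Λ := by simp [hw, hx]
        rw [hwx]
        have : max 0 (ε * r - 1 - dist y z) ≤ max 0 (ε * r - 1 - dist x z) + 1 := by
          refine max_le (by positivity) ?_
          linarith [le_max_right 0 (ε * r - 1 - dist x z)]
        nlinarith
      · push Not at hx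
        have h1 : max 0 (ε * r - 1 - dist y z) = 0 := max_eq_left (by linarith)
        rw [h1]
        have : 0 ≤ (Λ : ℝ) * max 0 (ε * r - 1 - dist x z) := by positivity
        have : (0 : ℝ) ≤ (w x : ℝ) := Nat.cast_nonneg _
        linarith
  have hfar : ∀ i ≤ m, ε * r / 2 < dist (p i) z := by
    intro i hi
    by_contra hle
    push Not at hle
    obtain ⟨l, hl, hRl⟩ := hpre i hi
    have h1 := hpot _ _ _ hRl
    have h2 : ε * r < dist (c 0) z := hav 0 (by simp)
    have h3 : max 0 (ε * r - 1 - dist (c 0) z) = 0 := max_eq_left (by linarith)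
    rw [h3] at h1
    have h4 : ε * r / 4 ≤ max 0 (ε * r - 1 - dist (p i) z) :=
      le_trans (by linarith) (le_max_right _ _)
    have h5 : (l : ℝ) ≤ k := by exact_mod_cast hl
    have h6 : (Λ : ℝ) * (ε * r / 4) ≤ Λ * max 0 (ε * r - 1 - dist (p i) z) := by gcongr
    nlinarith
  have hr0 : 0 ≤ s - r := by linarith
  have hsr : (0 : ℝ) ≤ s + r := by linarith
  have hnear : ∀ i ≤ m, ∃ u, 0 ≤ u ∧ dist (p i) (α u) ≤ P := by
    intro i hi
    obtain ⟨_, ⟨u, hu, rfl⟩, h⟩ := hMo ((Λ : ℝ) + 1) hqg.1 0 m (Nat.cast_nonneg _) _ hqg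
      ⟨s - r, hr0, by simp [hp0, hc0]⟩ ⟨s + r, hsr, by simp [hpm, hc1]⟩ (i : ℝ)
      ⟨Nat.cast_nonneg _, by exact_mod_cast hi⟩
    rw [Nat.floor_natCast] at h
    exact ⟨u, hu, h.trans (le_max_left _ _)⟩
  have hs0 : (0 : ℝ) ≤ s := by linarith
  -- The chain follows `α` from before `s` to after `s`, hence passes near `α s`.
  have hbefore : ∀ i ≤ m, ∃ u, 0 ≤ u ∧ u ≤ s ∧ dist (p i) (α u) ≤ P := by
    intro i
    induction i with
    | zero =>
      intro _
      exact ⟨s - r, hr0, by linarith, by rw [hp0, hc0, dist_self]; exact hP0⟩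
    | succ i ih =>
      intro hi
      obtain ⟨u, hu, hus, hd⟩ := ih (by omega)
      obtain ⟨u', hu', hd'⟩ := hnear (i + 1) hi
      by_cases hle : u' ≤ s
      · exact ⟨u', hu', hle, hd'⟩
      exfalso
      push Not at hle
      have h1 : dist (α u) (α u') ≤ 2 * P + 1 := by
        have t1 := dist_triangle (α u) (p i) (α u')
        have t2 := dist_triangle (p i) (p (i + 1)) (α u')
        have t3 := hst i
        rw [dist_comm (α u) (p i)] at t1
        linarith
      have h2 := hα.abs_le (mem_Ici.2 hu) (mem_Ici.2 hu') h1
      rw [abs_sub_comm, abs_of_nonneg (by linarith)] at h2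
      have h3 := (hα.2 u (mem_Ici.2 hu) s (mem_Ici.2 hs0)).2
      rw [abs_sub_comm, abs_of_nonneg (by linarith)] at h3
      have h4 : L * (s - u) ≤ L * (L * (2 * P + 1 + L)) := by
        gcongr
        linarith
      have h5 := dist_triangle (p i) (α u) z
      have h6 := hfar i (by omega)
      linarith
  obtain ⟨u, hu, hus, hd⟩ := hbefore m le_rfl
  rw [hpm, hc1] at hd
  have h2 := hα.abs_le (mem_Ici.2 hsr) (mem_Ici.2 hu) hd
  rw [abs_of_nonneg (by linarith)] at h2
  linarith

/-! ### Lipschitz paths in a subset -/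

/-- `x` and `y` are joined by a `1`-Lipschitz path defined on `[0, ℓ]` with values in `U`; such
paths have length at most `ℓ`. -/
def JoinedBy {Y : Type*} [MetricSpace Y] (U : Set Y) (x y : Y) (ℓ : ℝ) : Prop :=
  0 ≤ ℓ ∧ ∃ c : ℝ → Y, c 0 = x ∧ c ℓ = y ∧
    ∀ s ∈ Icc 0 ℓ, c s ∈ U ∧ ∀ t ∈ Icc 0 ℓ, s ≤ t → dist (c s) (c t) ≤ t - s

section JoinedBy

variable {Y : Type*} [MetricSpace Y] {U : Set Y} {x y z : Y} {ℓ ℓ' : ℝ}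

theorem JoinedBy.refl (h : x ∈ U) : JoinedBy U x x 0 :=
  ⟨le_rfl, fun _ => x, rfl, rfl, fun s _ => ⟨h, fun t _ hst => by simpa using hst⟩⟩

theorem JoinedBy.symm (h : JoinedBy U x y ℓ) : JoinedBy U y x ℓ := by
  obtain ⟨h0, c, c0, c1, hc⟩ := h
  refine ⟨h0, fun t => c (ℓ - t), by simpa using c1, by simpa using c0, ?_⟩
  intro s hs
  have hs' : ℓ - s ∈ Icc 0 ℓ := ⟨by linarith [hs.2], by linarith [hs.1]⟩
  refine ⟨(hc _ hs').1, fun t ht hst => ?_⟩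
  have ht' : ℓ - t ∈ Icc 0 ℓ := ⟨by linarith [ht.2], by linarith [ht.1]⟩
  have := (hc _ ht').2 _ hs' (by linarith)
  rw [dist_comm]
  linarith

theorem JoinedBy.trans (h : JoinedBy U x y ℓ) (h' : JoinedBy U y z ℓ') :
    JoinedBy U x z (ℓ + ℓ') := by
  obtain ⟨h0, c, c0, c1, hc⟩ := h
  obtain ⟨h0', c', c0', c1', hc'⟩ := h'
  refine ⟨by linarith, fun t => if t ≤ ℓ then c t else c' (t - ℓ), by simp [h0, c0], ?_, ?_⟩
  · rcases h0'.eq_or_lt with rfl | hlt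
    · simp [c1, ← c1', c0']
    · simp [hlt, c1']
  intro s hs
  by_cases h1 : s ≤ ℓ
  · have m1 : s ∈ Icc 0 ℓ := ⟨hs.1, h1⟩
    refine ⟨by simpa [h1] using (hc s m1).1, fun t ht hst => ?_⟩
    by_cases h2 : t ≤ ℓ
    · simpa [h1, h2] using (hc s m1).2 t ⟨ht.1, h2⟩ hst
    · simp only [h1, h2, if_true, if_false]
      push Not at h2
      have a1 := (hc s m1).2 ℓ ⟨h0, le_rfl⟩ h1
      have a2 := (hc' 0 ⟨le_rfl, h0'⟩).2 (t - ℓ) ⟨by linarith, by linarith [ht.2]⟩ (by linarith)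
      rw [c1] at a1
      rw [c0'] at a2
      linarith [dist_triangle (c s) y (c' (t - ℓ))]
  · push Not at h1
    have m1 : s - ℓ ∈ Icc 0 ℓ' := ⟨by linarith, by linarith [hs.2]⟩
    refine ⟨by simpa [h1.not_ge] using (hc' _ m1).1, fun t ht hst => ?_⟩
    have h2 : ℓ < t := by linarith
    simp only [h1.not_ge, h2.not_ge, if_false]
    have := (hc' _ m1).2 (t - ℓ) ⟨by linarith, by linarith [ht.2]⟩ (by linarith)
    linarith

theorem JoinedBy.mono (h : JoinedBy U x y ℓ) (hl : ℓ ≤ ℓ') : JoinedBy U x y ℓ' := by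
  obtain ⟨h0, c, c0, c1, hc⟩ := h
  have hmem : ∀ t, 0 ≤ t → min t ℓ ∈ Icc 0 ℓ := fun t ht => ⟨le_min ht h0, min_le_right _ _⟩
  refine ⟨h0.trans hl, fun t => c (min t ℓ), by simp [h0, c0], by simp [hl, c1], ?_⟩
  intro s hs
  refine ⟨(hc _ (hmem s hs.1)).1, fun t ht hst => ?_⟩
  refine ((hc _ (hmem s hs.1)).2 _ (hmem t ht.1) (min_le_min_right _ hst)).trans ?_
  rcases min_cases t ℓ with ⟨h1, _⟩ | ⟨h1, _⟩ <;> rcases min_cases s ℓ with ⟨h2, _⟩ | ⟨h2, _⟩ <;>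
    rw [h1, h2] <;> linarith

/-- A geodesic from `x` of length at most `A` stays outside the ball of radius `ρ` about `p` if
`x` is at distance more than `ρ + A` from `p`. -/
theorem JoinedBy.of_geodesic (hY : IsGeodesicSpace Y) {p : Y} {ρ A : ℝ} (hA : dist x y ≤ A)
    (hx : ρ + A < dist x p) : JoinedBy {u | ρ < dist u p} x y A := by
  refine JoinedBy.mono ?_ hA
  obtain ⟨g, g0, g1, hg⟩ := hY x y
  have hd : 0 ≤ dist x y := dist_nonneg
  refine ⟨hd, g, g0, g1, fun s hs => ⟨?_, fun t ht hst => ?_⟩⟩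
  · have h1 := hg 0 ⟨le_rfl, hd⟩ s hs
    rw [g0, zero_sub, abs_neg, abs_of_nonneg hs.1] at h1
    have h2 := dist_triangle x (g s) p
    have := hs.2
    change ρ < dist (g s) p
    linarith
  · rw [hg s hs t ht, abs_sub_comm, abs_of_nonneg (by linarith)]

/-- Joining consecutive points of a quasi-geodesic by geodesics gives a path whose length is
linear in the parameter and which stays uniformly close to the quasi-geodesic. -/
theorem JoinedBy.of_qg (hY : IsGeodesicSpace Y) {C : ℝ} {I : Set ℝ} {q : ℝ → Y}
    (hq : IsQG dist C I q) {p : Y} {ρ a b : ℝ} (hab : a ≤ b) (hI : Icc a b ⊆ I)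
    (hfar : ∀ t ∈ Icc a b, ρ + 2 * C < dist (q t) p) :
    JoinedBy {u | ρ < dist u p} (q a) (q b) ((b - a + 1) * (2 * C)) := by
  have hC := hq.1
  have hshort : ∀ s ∈ Icc a b, ∀ t ∈ Icc a b, s ≤ t → t ≤ s + 1 →
      JoinedBy {u | ρ < dist u p} (q s) (q t) (2 * C) := by
    intro s hs t ht h1 h2
    refine JoinedBy.of_geodesic hY ?_ (hfar s hs)
    have h3 := (hq.2 s (hI hs) t (hI ht)).2
    rw [abs_sub_comm, abs_of_nonneg (by linarith)] at h3
    nlinarith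
  have hint : ∀ n : ℕ, a + n ≤ b → JoinedBy {u | ρ < dist u p} (q a) (q (a + n)) (n * (2 * C)) := by
    intro n
    induction n with
    | zero =>
      intro _
      simp only [Nat.cast_zero, add_zero, zero_mul]
      refine JoinedBy.refl ?_
      have := hfar a ⟨le_rfl, hab⟩
      change ρ < dist (q a) p
      linarith
    | succ n ih =>
      intro h
      push_cast at h ⊢
      have hn : (0 : ℝ) ≤ n := Nat.cast_nonneg _
      have h1 := (ih (by linarith)).trans (hshort (a + n) ⟨by linarith, by linarith⟩ (a + (n + 1))
        ⟨by linarith, by linarith⟩ (by linarith) (by linarith))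
      exact h1.mono (by linarith)
  have h1 := Nat.floor_le (sub_nonneg.2 hab)
  have h2 := Nat.lt_floor_add_one (b - a)
  have h0 : (0 : ℝ) ≤ ⌊b - a⌋₊ := Nat.cast_nonneg _
  have h3 := (hint ⌊b - a⌋₊ (by linarith)).trans (hshort (a + ⌊b - a⌋₊) ⟨by linarith, by linarith⟩ b
    ⟨hab, le_rfl⟩ (by linarith) (by linarith))
  refine h3.mono ?_
  nlinarith

theorem divergence_le_of_joinedBy {β : ℝ → Y} {s r ε : ℝ} (hs : r ≤ s)
    (h : JoinedBy {u | ε * r < dist u (β s)} (β (s - r)) (β (s + r)) ℓ) :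
    divergence β r ε ≤ ENNReal.ofReal ℓ := by
  obtain ⟨h0, c, c0, c1, hc⟩ := h
  have hmem : ∀ t ∈ Icc (0 : ℝ) 1, ℓ * t ∈ Icc 0 ℓ := fun t ht =>
    ⟨mul_nonneg h0 ht.1, by nlinarith [ht.2]⟩
  have hlip : LipschitzOnWith (Real.toNNReal ℓ) (fun t => c (ℓ * t)) (Icc 0 1) := by
    refine LipschitzOnWith.of_dist_le_mul fun s hs t ht => ?_
    rw [Real.coe_toNNReal _ h0, Real.dist_eq]
    rcases le_total s t with hst | hst
    · rw [abs_sub_comm, abs_of_nonneg (by linarith)]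
      have := (hc _ (hmem s hs)).2 _ (hmem t ht) (by gcongr)
      linarith
    · rw [abs_of_nonneg (by linarith), dist_comm]
      have := (hc _ (hmem t ht)).2 _ (hmem s hs) (by gcongr)
      linarith
  have hvar : eVariationOn (fun t => c (ℓ * t)) (Icc 0 1) ≤ ENNReal.ofReal ℓ := by
    have h1 := hlip.comp_eVariationOn_le (g := id) (s := Icc 0 1) (mapsTo_id _)
    have h2 := ((monotoneOn_id (s := Icc (0 : ℝ) 1)).eVariationOn_eq (a := 0) (b := 1)
      (by simp) (by simp)).le
    simp only [inter_self, id, sub_zero, ENNReal.ofReal_one] at h2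
    refine h1.trans ((mul_le_mul_right h2 _).trans ?_)
    simp [ENNReal.ofReal]
  unfold divergence
  exact iInf_le_of_le s <| iInf_le_of_le hs <| iInf_le_of_le _ <| iInf_le_of_le hlip.continuousOn <|
    iInf_le_of_le (by simpa using c0) <| iInf_le_of_le (by simpa using c1) <|
    iInf_le_of_le (fun t ht => (hc _ (hmem t ht)).1) hvar

end JoinedBy

/-! ### Superlinear divergence implies Morse -/

/-- Slope against which the divergence of an `L`-quasi-geodesic ray is compared when it is
tested on a detour along a `C`-quasi-geodesic. -/
noncomputable def detourSlope (L C : ℝ) : ℝ :=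
  4 * L * (3 * L + 1) + 4 + 2 * C * (C * (4 + 6 * L ^ 2 + L + C) + 1)

theorem detour_length_le {L C D : ℝ} (hL : 1 ≤ L) (hC : 1 ≤ C) (hD : 1 ≤ D) :
    2 * ((3 * L * D + 1) * (2 * L)) + 2 * (D + 1) +
      (C * (2 * (D + 1) + (L * (6 * L * D) + L) + C) + 1) * (2 * C) ≤ detourSlope L C * D := by
  have h1 : 0 ≤ (D - 1) * (4 * L + 2) := mul_nonneg (by linarith) (by linarith)
  have h2 : 0 ≤ (D - 1) * (2 * C * (C * (2 + L + C) + 1)) :=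
    mul_nonneg (by linarith) (by positivity)
  unfold detourSlope
  linarith

/-- If a `C`-quasi-geodesic `q` with endpoints `β a'`, `β b'` keeps distance more than `D - 1` from
`β s` while every point of `β [a', b']` is within `D + 1` of it, then running along `β`, then `q`,
then `β` again gives a detour around `β s`, from `β (s - r)` to `β (s + r)`, of length at most `detourSlope L C * D`, at a scale `r`
comparable to `D`. The detour follows `β` until parameter distance `3 * L * D` from `s` (or the
endpoint of `q`), so that the geodesic connecting it to `q` avoids the ball. -/
theorem exists_detour {Y : Type*} [MetricSpace Y] (hY : IsGeodesicSpace Y) {β q : ℝ → Y}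
    {L C a b a' b' s D : ℝ} (hβ : IsQG dist L (Ici 0) β) (hq : IsQG dist C (Icc a b) q)
    (hab : a ≤ b) (ha' : 0 ≤ a') (hqa : q a = β a') (hqb : q b = β b')
    (hs : s ∈ Icc a' b') (hD : 20 * L ^ 3 + 20 * C ≤ D)
    (hfar : ∀ t ∈ Icc a b, D - 1 < dist (β s) (q t))
    (hnear : ∀ u ∈ Icc a' b', ∃ t ∈ Icc a b, dist (β u) (q t) ≤ D + 1) :
    ∃ r, D / (2 * L) ≤ r ∧ r ≤ s ∧ ∀ ε ≤ 1 / (16 * L), divergence β r ε ≤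
      ENNReal.ofReal (detourSlope L C * D) := by
  have hL := hβ.1
  have hC := hq.1
  have hL0 : 0 < L := by linarith
  have hL2 : L ≤ L ^ 2 := by nlinarith
  have hL3 : L ^ 2 ≤ L ^ 3 := by nlinarith [sq_nonneg L]
  have hD0 : 40 ≤ D := by linarith
  have hs0 : 0 ≤ s := ha'.trans hs.1
  obtain ⟨r, hr⟩ : ∃ r, r = (D - 1 - L) / L := ⟨_, rfl⟩
  have hrL : L * r = D - 1 - L := by rw [hr]; field_simp
  have hr_lo : D / (2 * L) ≤ r := by
    rw [div_le_iff₀ (by positivity)]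
    linarith
  have hr0 : 0 < r := lt_of_lt_of_le (by positivity) hr_lo
  have hrD : r ≤ D := by nlinarith
  have hr_big : 4 * L ^ 2 < r := by
    have : 4 * L ^ 2 * L < r * L := by linarith [show 4 * L ^ 2 * L = 4 * L ^ 3 by ring]
    exact lt_of_mul_lt_mul_right this hL0.le
  -- Radius of the ball to be avoided.
  obtain ⟨ρ, hρ⟩ : ∃ ρ, ρ = r / (16 * L) := ⟨_, rfl⟩
  have hρr : ρ * (16 * L) = r := by rw [hρ]; field_simp
  have hρ0 : 0 < ρ := by rw [hρ]; positivity
  have hρD : 16 * ρ ≤ D := by nlinarith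
  have hρL : 3 * L + ρ < r / L := by
    rw [lt_div_iff₀ hL0]
    nlinarith
  have hsa : r < s - a' := by
    have h1 := hfar a ⟨le_rfl, hab⟩
    have h2 := (hβ.2 s (mem_Ici.2 hs0) a' (mem_Ici.2 ha')).2
    rw [abs_of_nonneg (by linarith [hs.1])] at h2
    rw [hqa] at h1
    have : L * r < L * (s - a') := by linarith
    exact lt_of_mul_lt_mul_left this hL0.le
  have hsb : r < b' - s := by
    have h1 := hfar b ⟨hab, le_rfl⟩
    have h2 := (hβ.2 s (mem_Ici.2 hs0) b' (mem_Ici.2 (hs0.trans hs.2))).2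
    rw [abs_sub_comm, abs_of_nonneg (by linarith [hs.2])] at h2
    rw [hqb] at h1
    have : L * r < L * (b' - s) := by linarith
    exact lt_of_mul_lt_mul_left this hL0.le
  have hLD : r ≤ 3 * L * D := by nlinarith
  set U : Set Y := {u | ρ < dist u (β s)} with hU
  have hlow : ∀ u, 0 ≤ u → |u - s| / L - L ≤ dist (β u) (β s) := fun u hu =>
    (hβ.2 u (mem_Ici.2 hu) s (mem_Ici.2 hs0)).1
  have hβfar : ∀ u, 0 ≤ u → r ≤ |u - s| → ρ + 2 * L < dist (β u) (β s) := by
    intro u hu hur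
    have h1 := hlow u hu
    have h2 : r / L ≤ |u - s| / L := by gcongr
    linarith
  have hqfar : ∀ t ∈ Icc a b, ρ + 2 * C < dist (q t) (β s) := by
    intro t ht
    have := hfar t ht
    rw [dist_comm] at this
    linarith
  -- Connecting `β u` to `q`, for `u` far from `s` or an endpoint.
  have hjump : ∀ u ∈ Icc a' b', 3 * L * D ≤ |u - s| →
      ∃ t ∈ Icc a b, dist (β u) (q t) ≤ D + 1 ∧ JoinedBy U (β u) (q t) (D + 1) := by
    intro u hu hus
    obtain ⟨t, ht, hd⟩ := hnear u hu
    refine ⟨t, ht, hd, JoinedBy.of_geodesic hY hd ?_⟩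
    have h1 := hlow u (ha'.trans hu.1)
    have h2 : 3 * D ≤ |u - s| / L := by rw [le_div_iff₀ hL0]; linarith
    linarith
  have hq_mem : ∀ t ∈ Icc a b, q t ∈ U := by
    intro t ht
    have := hqfar t ht
    change ρ < dist (q t) (β s)
    linarith
  have hleft : ∃ u t, a' ≤ u ∧ u ≤ s - r ∧ s - 3 * L * D ≤ u ∧ t ∈ Icc a b ∧
      dist (β u) (q t) ≤ D + 1 ∧ JoinedBy U (β u) (q t) (D + 1) := by
    rcases le_total a' (s - 3 * L * D) with h | h
    · obtain ⟨t, ht, h1, h2⟩ := hjump (s - 3 * L * D) ⟨h, by linarith [hs.2]⟩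
        (by rw [abs_sub_comm, sub_sub_cancel]; exact le_abs_self _)
      exact ⟨_, t, h, by linarith, le_rfl, ht, h1, h2⟩
    · refine ⟨a', a, le_rfl, by linarith, h, ⟨le_rfl, hab⟩, ?_, ?_⟩
      · rw [hqa, dist_self]; linarith
      · rw [← hqa]; exact (JoinedBy.refl (hq_mem a ⟨le_rfl, hab⟩)).mono (by linarith)
  have hright : ∃ u t, u ≤ b' ∧ s + r ≤ u ∧ u ≤ s + 3 * L * D ∧ t ∈ Icc a b ∧
      dist (β u) (q t) ≤ D + 1 ∧ JoinedBy U (β u) (q t) (D + 1) := by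
    rcases le_total (s + 3 * L * D) b' with h | h
    · obtain ⟨t, ht, h1, h2⟩ := hjump (s + 3 * L * D) ⟨by linarith [hs.1], h⟩
        (by rw [add_sub_cancel_left]; exact le_abs_self _)
      exact ⟨_, t, h, by linarith, le_rfl, ht, h1, h2⟩
    · refine ⟨b', b, le_rfl, by linarith, h, ⟨hab, le_rfl⟩, ?_, ?_⟩
      · rw [hqb, dist_self]; linarith
      · rw [← hqb]; exact (JoinedBy.refl (hq_mem b ⟨hab, le_rfl⟩)).mono (by linarith)
  obtain ⟨u₁, t₁, hu₁, hu₁r, hu₁', ht₁, hd₁, hj₁⟩ := hleft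
  obtain ⟨u₂, t₂, hu₂, hu₂r, hu₂', ht₂, hd₂, hj₂⟩ := hright
  have hp₁ : JoinedBy U (β (s - r)) (β u₁) ((3 * L * D + 1) * (2 * L)) := by
    refine ((JoinedBy.of_qg hY hβ hu₁r (fun t ht => mem_Ici.2 (by linarith [ht.1])) ?_).symm).mono ?_
    · intro t ht
      refine hβfar t (by linarith [ht.1]) ?_
      rw [abs_sub_comm]
      exact le_trans (by linarith [ht.2]) (le_abs_self _)
    · gcongr
      linarith
  have hp₂ : JoinedBy U (β u₂) (β (s + r)) ((3 * L * D + 1) * (2 * L)) := by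
    refine ((JoinedBy.of_qg hY hβ hu₂r (fun t ht => mem_Ici.2 (by linarith [ht.1])) ?_).symm).mono ?_
    · intro t ht
      refine hβfar t (by linarith [ht.1]) ?_
      exact le_trans (by linarith [ht.1]) (le_abs_self _)
    · gcongr
      linarith
  have hqd : dist (q t₁) (q t₂) ≤ 2 * (D + 1) + (L * (6 * L * D) + L) := by
    have h1 := (hβ.2 u₁ (mem_Ici.2 (by linarith)) u₂ (mem_Ici.2 (by linarith))).2
    have h2 : |u₁ - u₂| ≤ 6 * L * D := by rw [abs_le]; constructor <;> linarith
    have h3 : L * |u₁ - u₂| ≤ L * (6 * L * D) := by gcongr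
    have h4 := dist_triangle4 (q t₁) (β u₁) (β u₂) (q t₂)
    rw [dist_comm (q t₁) (β u₁)] at h4
    linarith
  have htd := hq.abs_le ht₁ ht₂ hqd
  obtain ⟨W, hW⟩ : ∃ W, W = C * (2 * (D + 1) + (L * (6 * L * D) + L) + C) := ⟨_, rfl⟩
  rw [← hW] at htd
  have hp₃ : JoinedBy U (q t₁) (q t₂) ((W + 1) * (2 * C)) := by
    rcases le_total t₁ t₂ with h | h
    · refine (JoinedBy.of_qg hY hq h (Icc_subset_Icc ht₁.1 ht₂.2) fun t ht =>
        hqfar t ⟨ht₁.1.trans ht.1, ht.2.trans ht₂.2⟩).mono ?_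
      rw [abs_sub_comm, abs_of_nonneg (by linarith)] at htd
      gcongr
    · refine (JoinedBy.of_qg hY hq h (Icc_subset_Icc ht₂.1 ht₁.2) fun t ht =>
        hqfar t ⟨ht₂.1.trans ht.1, ht.2.trans ht₁.2⟩).symm.mono ?_
      rw [abs_of_nonneg (by linarith)] at htd
      gcongr
  have hall := (((hp₁.trans hj₁).trans hp₃).trans hj₂.symm).trans hp₂
  refine ⟨r, hr_lo, by linarith, fun ε hε => ?_⟩
  have hερ : ε * r ≤ ρ := by
    rw [hρ, div_eq_mul_one_div, mul_comm]
    gcongr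
  obtain ⟨l0, c, c0, c1, hc⟩ := hall
  refine (divergence_le_of_joinedBy (s := s) (by linarith)
    ⟨l0, c, c0, c1, fun t ht => ⟨lt_of_le_of_lt hερ (hc t ht).1, (hc t ht).2⟩⟩).trans ?_
  apply ENNReal.ofReal_le_ofReal
  rw [hW]
  exact (le_of_eq (by ring)).trans (detour_length_le hL hC (by linarith))

/-- Points of a `C`-quasi-geodesic `q` from `β a'` to `β b'` are close to `β` as soon as all points
of `β [a', b']` are close to `q`. -/
theorem near_of_near {Y : Type*} [MetricSpace Y] {β q : ℝ → Y} {L C a b a' b' B : ℝ}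
    (hβ : IsQG dist L (Ici 0) β) (hq : IsQG dist C (Icc a b) q)
    (hab : a ≤ b) (ha' : 0 ≤ a') (hab' : a' ≤ b') (hqa : q a = β a') (hqb : q b = β b')
    (hB : 0 ≤ B) (hnear : ∀ u ∈ Icc a' b', ∃ t ∈ Icc a b, dist (β u) (q t) ≤ B)
    {t : ℝ} (ht : t ∈ Icc a b) :
    ∃ u, 0 ≤ u ∧ dist (q t) (β u) ≤ C * (C * (2 * B + 2 * L + C)) + C + B := by
  have hL := hβ.1
  have hC := hq.1
  -- If `β u` is close to `q t₁`, and `q t₁` to `q t₂` with `t₁ ≤ t ≤ t₂`, then `β u` is close to `q t`.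
  have hmid : ∀ u t₁ t₂, 0 ≤ u → t₁ ∈ Icc a b → t₂ ∈ Icc a b → t₁ ≤ t → t ≤ t₂ →
      dist (β u) (q t₁) ≤ B → dist (q t₁) (q t₂) ≤ 2 * B + 2 * L →
      dist (q t) (β u) ≤ C * (C * (2 * B + 2 * L + C)) + C + B := by
    intro u t₁ t₂ hu h1 h2 h1t ht2 hd hd2
    have h3 := hq.abs_le h1 h2 hd2
    rw [abs_sub_comm, abs_of_nonneg (by linarith)] at h3
    have h4 := (hq.2 t ht t₁ h1).2
    rw [abs_of_nonneg (by linarith)] at h4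
    have h5 : C * (t - t₁) ≤ C * (C * (2 * B + 2 * L + C)) := by gcongr; linarith
    have h6 := dist_triangle (q t) (q t₁) (β u)
    rw [dist_comm (q t₁) (β u)] at h6
    linarith
  by_contra hcon
  push Not at hcon
  have hstep : ∀ n : ℕ, ∃ t₁ ∈ Icc a b, t₁ ≤ t ∧ dist (β (min (a' + n) b')) (q t₁) ≤ B := by
    intro n
    induction n with
    | zero => exact ⟨a, ⟨le_rfl, hab⟩, ht.1, by simp [hab', hqa, hB]⟩
    | succ n ih =>
      obtain ⟨t₁, m1, h1, d1⟩ := ih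
      have hn : (0 : ℝ) ≤ n := Nat.cast_nonneg _
      have hu0 : a' ≤ min (a' + n) b' := le_min (by linarith) hab'
      have hu1 : a' ≤ min (a' + (n + 1 : ℕ)) b' := le_min (by push_cast; linarith) hab'
      obtain ⟨t₂, m2, d2⟩ := hnear (min (a' + (n + 1 : ℕ)) b') ⟨hu1, min_le_right _ _⟩
      by_cases h2 : t₂ ≤ t
      · exact ⟨t₂, m2, h2, d2⟩
      exfalso
      push Not at h2
      have hdist : dist (β (min (a' + n) b')) (β (min (a' + (n + 1 : ℕ)) b')) ≤ 2 * L := by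
        have h3 := (hβ.2 _ (mem_Ici.2 (ha'.trans hu0)) _ (mem_Ici.2 (ha'.trans hu1))).2
        have h4 : |min (a' + n) b' - min (a' + (n + 1 : ℕ)) b'| ≤ 1 := by
          refine (abs_min_sub_min_le_max _ _ _ _).trans ?_
          simp
        nlinarith
      have h5 := dist_triangle4 (q t₁) (β (min (a' + n) b')) (β (min (a' + (n + 1 : ℕ)) b')) (q t₂)
      rw [dist_comm (q t₁) (β _)] at h5
      have h6 := hmid _ t₁ t₂ (ha'.trans hu0) m1 m2 h1 h2.le d1 (by linarith)
      exact absurd h6 (not_le.2 (hcon _ (ha'.trans hu0)))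
  obtain ⟨t₁, m1, h1, d1⟩ := hstep ⌈b' - a'⌉₊
  rw [min_eq_right (by linarith [Nat.le_ceil (b' - a')])] at d1
  have h6 := hmid b' t₁ b (ha'.trans hab') m1 ⟨hab, le_rfl⟩ h1 ht.2 d1
    (by rw [hqb, dist_comm]; linarith)
  exact absurd h6 (not_le.2 (hcon _ (ha'.trans hab')))

theorem IsQG.reverse {Y : Type*} [MetricSpace Y] {C a b : ℝ} {q : ℝ → Y}
    (h : IsQG dist C (Icc a b) q) : IsQG dist C (Icc a b) (fun t => q (a + b - t)) := by
  refine ⟨h.1, fun s hs t ht => ?_⟩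
  have := h.2 (a + b - s) ⟨by linarith [hs.2], by linarith [hs.1]⟩ (a + b - t)
    ⟨by linarith [ht.2], by linarith [ht.1]⟩
  rwa [show a + b - s - (a + b - t) = -(s - t) by ring, abs_neg] at this

/-- Superlinear divergence, with inverse growth rate `R`, implies the Morse property, with a gauge
depending only on `R` and `L`. -/
theorem exists_gauge_of_divergence (R : ℝ → ℝ) (L C : ℝ) :
    ∃ B : ℝ, ∀ (Y : Type v) [MetricSpace Y], IsGeodesicSpace Y → ∀ (ε : ℝ), ε ≤ 1 / (16 * L) →
      ∀ β : ℝ → Y, IsQG dist L (Ici 0) β →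
      (∀ M r : ℝ, 0 ≤ M → R M ≤ r → ENNReal.ofReal (M * r) ≤ divergence β r ε) →
      ∀ a b : ℝ, a ≤ b → ∀ q : ℝ → Y, IsQG dist C (Icc a b) q → q a ∈ β '' Ici 0 →
      q b ∈ β '' Ici 0 → ∀ t ∈ Icc a b, InNbhd dist (β '' Ici 0) B (q t) := by
  obtain ⟨M, hM⟩ : ∃ M, M = 2 * L * detourSlope L C + 1 := ⟨_, rfl⟩
  obtain ⟨D₀, hD₀⟩ : ∃ D₀, D₀ = 20 * L ^ 3 + 20 * C + 2 * L * |R M| := ⟨_, rfl⟩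
  refine ⟨C * (C * (2 * (D₀ + 2) + 2 * L + C)) + C + (D₀ + 2), ?_⟩
  intro Y _ hY ε hε β hβ hdiv a b hab q hq hqa hqb t ht
  obtain ⟨a', ha', hqa⟩ := hqa
  obtain ⟨b', hb', hqb⟩ := hqb
  wlog hab' : a' ≤ b' generalizing a' b' q t
  · have := this (fun t => q (a + b - t)) hq.reverse (a + b - t)
      ⟨by linarith [ht.2], by linarith [ht.1]⟩ b' hb' (by simpa using hqb) a' ha'
      (by simpa using hqa) (le_of_not_ge hab')
    simpa using this
  have hL := hβ.1
  have hC := hq.1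
  have hL0 : 0 < L := by linarith
  have hslope : 0 ≤ detourSlope L C := by unfold detourSlope; positivity
  have hM0 : 0 ≤ M := by rw [hM]; positivity
  have hD₀0 : 0 ≤ D₀ := by rw [hD₀]; positivity
  have hne : (q '' Icc a b).Nonempty := ⟨q a, a, ⟨le_rfl, hab⟩, rfl⟩
  -- The least integer `n` bounding the distance from `β [a', b']` to `q`.
  have hbdd : ∃ n : ℕ, ∀ u ∈ Icc a' b', Metric.infDist (β u) (q '' Icc a b) ≤ n := by
    refine ⟨⌈L * (b' - a') + L⌉₊, fun u hu => ?_⟩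
    refine (Metric.infDist_le_dist_of_mem (mem_image_of_mem q (left_mem_Icc.2 hab))).trans
      (le_trans ?_ (Nat.le_ceil _))
    rw [← hqa]
    refine (hβ.2 u (mem_Ici.2 (le_trans ha' hu.1)) a' ha').2.trans ?_
    rw [abs_of_nonneg (by linarith [hu.1])]
    gcongr
    exact hu.2
  classical
  obtain ⟨n, hn, hmin⟩ : ∃ n : ℕ, (∀ u ∈ Icc a' b', Metric.infDist (β u) (q '' Icc a b) ≤ n) ∧
      ∀ m < n, ¬ ∀ u ∈ Icc a' b', Metric.infDist (β u) (q '' Icc a b) ≤ m :=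
    ⟨Nat.find hbdd, Nat.find_spec hbdd, fun m hm => Nat.find_min hbdd hm⟩
  have hnear : ∀ u ∈ Icc a' b', ∃ t ∈ Icc a b, dist (β u) (q t) ≤ n + 1 := by
    intro u hu
    obtain ⟨_, ⟨t, ht, rfl⟩, h⟩ := (Metric.infDist_lt_iff hne).1
      (lt_of_le_of_lt (hn u hu) (lt_add_one (n : ℝ)))
    exact ⟨t, ht, h.le⟩
  have hnD : (n : ℝ) ≤ D₀ + 1 := by
    by_contra hlt
    push Not at hlt
    have hn1 : 1 ≤ n := by
      have : (0 : ℝ) < n := by linarith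
      exact_mod_cast this
    have := hmin (n - 1) (by omega)
    push Not at this
    obtain ⟨s, hs, hsd⟩ := this
    rw [Nat.cast_sub hn1, Nat.cast_one] at hsd
    have hR0 : 0 ≤ 2 * L * |R M| := by positivity
    obtain ⟨r, hr, -, hlen⟩ := exists_detour hY hβ hq hab ha' hqa.symm hqb.symm hs
      (D := n) (by linarith)
      (fun t ht => hsd.trans_le (Metric.infDist_le_dist_of_mem (mem_image_of_mem q ht))) hnear
    rw [div_le_iff₀ (by positivity)] at hr
    have hRr : R M ≤ r := by
      refine (le_abs_self _).trans ?_
      have : 2 * L * |R M| ≤ 2 * L * r := by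
        have : (0 : ℝ) ≤ 20 * L ^ 3 := by positivity
        linarith
      exact le_of_mul_le_mul_left this (by positivity)
    have h1 := (hdiv M r hM0 hRr).trans (hlen ε hε)
    rw [ENNReal.ofReal_le_ofReal_iff (by positivity)] at h1
    have hr0 : 0 < r := by
      have : (0 : ℝ) < r * (2 * L) := by linarith
      exact pos_of_mul_pos_left this (by positivity)
    have h2 : detourSlope L C * n ≤ detourSlope L C * (r * (2 * L)) := by gcongr
    rw [hM] at h1
    linarith
  obtain ⟨u, hu, hd⟩ := near_of_near hβ hq hab ha' hab' hqa.symm hqb.symm (B := D₀ + 2)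
    (by linarith) (fun u hu => by
      obtain ⟨t, ht, h⟩ := hnear u hu
      exact ⟨t, ht, by linarith⟩) ht
  exact ⟨β u, ⟨u, hu, rfl⟩, hd⟩

/-- **Lemma 2.8** (Statement 6).  Let `α ⊆ X`, `β ⊆ Y` be `L`-quasi-geodesic rays in proper
geodesic metric spaces, with `δ_α(r, ε₁) ≤ K · δ_β(r, ε₂)` for all `r > K`, where `K ≥ 0`
and `0 < ε₁, ε₂ ≤ 1/(16L)`.  If `α` is `N`-Morse, then `β` is `N'`-Morse, where `N'`
depends only on `N, L, K, ε₁` (in particular, not on the spaces nor on `ε₂`). -/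
theorem morse_vs_divergence
    (N : ℝ → ℝ) (L K ε₁ : ℝ) (hL : 1 ≤ L) (hK : 0 ≤ K)
    (hε₁ : 0 < ε₁) (hε₁' : ε₁ ≤ 1 / (16 * L)) :
    ∃ N' : ℝ → ℝ,
      ∀ (X : Type u) (Y : Type v) [MetricSpace X] [MetricSpace Y],
        ProperSpace X → ProperSpace Y → IsGeodesicSpace X → IsGeodesicSpace Y →
        ∀ ε₂ : ℝ, 0 < ε₂ → ε₂ ≤ 1 / (16 * L) →
        ∀ (α : ℝ → X) (β : ℝ → Y),
          IsQG dist L (Set.Ici 0) α → IsQG dist L (Set.Ici 0) β →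
          (∀ r : ℝ, K < r →
            divergence α r ε₁ ≤ ENNReal.ofReal K * divergence β r ε₂) →
          MorseSet dist N (α '' Set.Ici 0) →
          MorseSet dist N' (β '' Set.Ici 0) := by
  -- Slope `K * M + 1` for the divergence of `α` yields slope `M` for that of `β`; the absolute value
  -- serves only to state this for all real `M`.
  choose R hR using fun M : ℝ =>
    le_divergence_of_morse.{u} N L ε₁ (K * |M| + 1) hL hε₁ (by positivity)
  choose N' hN' using exists_gauge_of_divergence.{v} (fun M => max (R M) (K + 1)) L
  refine ⟨N', ?_⟩
  intro X Y _ _ _ _ hX hY ε₂ _ hε₂ α β hα hβ hdiv hMo C _ a b hab q hq hqa hqb t ht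
  refine hN' C Y hY ε₂ hε₂ β hβ ?_ a b hab q hq hqa hqb t ht
  intro M r hM hr
  have hRr : R M ≤ r := (le_max_left _ _).trans hr
  have hKr : K + 1 ≤ r := (le_max_right _ _).trans hr
  have h1 := (hR M X hX α hα hMo r hRr).trans (hdiv r (by linarith))
  by_contra hlt
  push Not at hlt
  have h2 : ENNReal.ofReal K * divergence β r ε₂ ≤ ENNReal.ofReal (K * (M * r)) := by
    rw [ENNReal.ofReal_mul hK]
    gcongr
  have h3 := h1.trans h2
  rw [abs_of_nonneg hM, ENNReal.ofReal_le_ofReal_iff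
    (mul_nonneg hK (mul_nonneg hM (by linarith)))] at h3
  linarith

end MorseGoG
end
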